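/- Let q be a braiding matrix with connected Dynkin diagram such that B_q is finite dimensional, and let B be a pre-Nichols algebra of q with finite GKdim. Let i,j ∈ I_θ with c_{ij} = 0 (equivalently q̃_{ij} = 1), and assume that either ord(q_{ii}) + ord(q_{jj}) > 4, or q_{ii}q_{jj} = 1 and there exists k ∈ I_θ \ {i,j} with q̃_{ik}q̃_{jk} ≠ 1. Then x_{ij} = (ad_c x_i)x_j = 0 in B. -/

import Mathlib

/-
Common framework for formalizing statements from
"Finite GK-dimensional pre-Nichols algebras of (super)modular and unidentified type"
(Angiono, Campagnolo, Sanmarco).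

We work over `ℂ` (an algebraically closed field of characteristic zero).
A braiding matrix is `q : Fin θ → Fin θ → ℂˣ`.  The tensor algebra `T(V)` of the
associated braided vector space of diagonal type is realized as the free algebra
on `Fin θ`.  The braided bialgebra structure on `T(V)` (the braided coproduct,
uniquely determined by the braiding matrix) is packaged in the structure
`BraidedStr`: its fields characterize it uniquely, so quantifying over
`S : BraidedStr θ q` is equivalent to using "the" braided coproduct.

A pre-Nichols algebra of `q` is the quotient `T(V)/I` by an ℕ₀-homogeneous
(two-sided) braided bi-ideal `I` generated in degrees ≥ 2 (`IsPreNicholsIdeal`);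
such an ideal is automatically contained in the defining ideal `Jq` of the
Nichols algebra, which is the largest such ideal.  A statement
"`x = 0` holds in the pre-Nichols algebra `T(V)/I`" is formalized as `x ∈ I`.
-/

open scoped TensorProduct

noncomputable section

namespace PreNicholsPaper

/-- The tensor algebra `T(V)` of the braided vector space of diagonal type of rank `θ`. -/
abbrev TV (θ : ℕ) := FreeAlgebra ℂ (Fin θ)

/-- The generator `x_i` of `T(V)`. -/
def gen (θ : ℕ) (i : Fin θ) : TV θ := FreeAlgebra.ι ℂ i

/-- The monomial `x_{i_1} ⋯ x_{i_n}` associated to a word. -/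
def wordElem (θ : ℕ) (w : List (Fin θ)) : TV θ := (w.map (gen θ)).prod

/-- The multidegree in `ℕ₀^θ` of a word. -/
def degW (θ : ℕ) (w : List (Fin θ)) : Fin θ → ℕ := fun i => w.count i

/-- `α_i`, the `i`-th canonical basis vector of `ℕ₀^θ`. -/
def δ (θ : ℕ) (i : Fin θ) : Fin θ → ℕ := fun k => if k = i then 1 else 0

/-- The bilinear form `ℕ₀^θ × ℕ₀^θ → ℂˣ` attached to the braiding matrix,
`q(α_i, α_j) = q_{ij}`, evaluated in `ℂ`. -/
def qf {θ : ℕ} (q : Fin θ → Fin θ → ℂˣ) (a b : Fin θ → ℕ) : ℂ :=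
  ∏ i : Fin θ, ∏ j : Fin θ, (q i j : ℂ) ^ (a i * b j)

/-- `q̃_{ij} = q_{ij} q_{ji}`. -/
def qtil {θ : ℕ} (q : Fin θ → Fin θ → ℂˣ) (i j : Fin θ) : ℂ := (q i j : ℂ) * (q j i : ℂ)

/-- The braided commutator `[u,v]_c = uv - q(a,b) vu` of elements `u, v`
which are homogeneous of multidegrees `a`, `b` respectively. -/
def brk {θ : ℕ} (q : Fin θ → Fin θ → ℂˣ) (a b : Fin θ → ℕ) (u v : TV θ) : TV θ :=
  u * v - qf q a b • (v * u)

/-- `(ad_c x_i) y = x_i y - q(α_i, b) y x_i` for `y` homogeneous of multidegree `b`. -/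
def ad1 {θ : ℕ} (q : Fin θ → Fin θ → ℂˣ) (i : Fin θ) (b : Fin θ → ℕ) (y : TV θ) : TV θ :=
  brk q (δ θ i) b (gen θ i) y

/-- The iterated braided adjoint `x_{i_1 i_2 ⋯ i_k} = (ad_c x_{i_1}) x_{i_2 ⋯ i_k}`. -/
def xw {θ : ℕ} (q : Fin θ → Fin θ → ℂˣ) : List (Fin θ) → TV θ
  | [] => 1
  | [i] => gen θ i
  | i :: w => ad1 q i (degW θ w) (xw q w)

/-- `(ad_c x_i)^m x_j`. -/
def adpow {θ : ℕ} (q : Fin θ → Fin θ → ℂˣ) (i j : Fin θ) : ℕ → TV θ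
  | 0 => gen θ j
  | m + 1 => ad1 q i (fun k => m * δ θ i k + δ θ j k) (adpow q i j m)

/-- The homogeneous component of total degree `n` of `T(V)`. -/
def homogTot (θ : ℕ) (n : ℕ) : Submodule ℂ (TV θ) :=
  Submodule.span ℂ {x | ∃ w : List (Fin θ), w.length = n ∧ x = wordElem θ w}

/-- The homogeneous component of multidegree `d ∈ ℕ₀^θ` of `T(V)`. -/
def homogD (θ : ℕ) (d : Fin θ → ℕ) : Submodule ℂ (TV θ) :=
  Submodule.span ℂ {x | ∃ w : List (Fin θ), degW θ w = d ∧ x = wordElem θ w}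

/-- The braided bialgebra structure on `T(V)` determined by the braiding matrix `q`:
the braided coproduct `Δ` together with the multiplication `mulB` of the braided
tensor product `T(V) ⊗ T(V)`.  These axioms determine `Δ` and `mulB` uniquely. -/
structure BraidedStr (θ : ℕ) (q : Fin θ → Fin θ → ℂˣ) where
  Δ : TV θ →ₗ[ℂ] TensorProduct ℂ (TV θ) (TV θ)
  mulB : TensorProduct ℂ (TV θ) (TV θ) →ₗ[ℂ]
    TensorProduct ℂ (TV θ) (TV θ) →ₗ[ℂ] TensorProduct ℂ (TV θ) (TV θ)
  mulB_spec : ∀ (a d : TV θ) (wb wc : List (Fin θ)),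
    mulB (a ⊗ₜ[ℂ] wordElem θ wb) (wordElem θ wc ⊗ₜ[ℂ] d)
      = qf q (degW θ wb) (degW θ wc) • ((a * wordElem θ wc) ⊗ₜ[ℂ] (wordElem θ wb * d))
  Δ_one : Δ 1 = 1 ⊗ₜ[ℂ] 1
  Δ_gen : ∀ i, Δ (gen θ i) = gen θ i ⊗ₜ[ℂ] 1 + 1 ⊗ₜ[ℂ] gen θ i
  Δ_mul : ∀ u v : TV θ, Δ (u * v) = mulB (Δ u) (Δ v)

variable {θ : ℕ} {q : Fin θ → Fin θ → ℂˣ}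

/-- `x` is a primitive element. -/
def IsPrimitiveIn (S : BraidedStr θ q) (x : TV θ) : Prop :=
  S.Δ x = x ⊗ₜ[ℂ] (1 : TV θ) + (1 : TV θ) ⊗ₜ[ℂ] x

/-- The submodule `I ⊗ T(V) + T(V) ⊗ J` of `T(V) ⊗ T(V)`. -/
def mixedPair (I J : Submodule ℂ (TV θ)) : Submodule ℂ (TensorProduct ℂ (TV θ) (TV θ)) :=
  Submodule.span ℂ
    ({x | ∃ a b : TV θ, a ∈ I ∧ x = a ⊗ₜ[ℂ] b} ∪ {x | ∃ a b : TV θ, b ∈ J ∧ x = a ⊗ₜ[ℂ] b})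

/-- The submodule `I ⊗ T(V) + T(V) ⊗ I` of `T(V) ⊗ T(V)`. -/
def mixedSub (I : Submodule ℂ (TV θ)) : Submodule ℂ (TensorProduct ℂ (TV θ) (TV θ)) :=
  mixedPair I I

/-- `I` is the defining ideal of a pre-Nichols algebra of `q`：an ℕ₀-homogeneous
two-sided (bi-)ideal of `T(V)` generated in degrees `≥ 2` which is also a coideal.
Such an ideal is automatically contained in the defining ideal `Jq` of the Nichols
algebra, and the pre-Nichols algebra is the quotient `T(V)/I`. -/
structure IsPreNicholsIdeal (S : BraidedStr θ q) (I : Submodule ℂ (TV θ)) : Prop where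
  mul_left : ∀ a x : TV θ, x ∈ I → a * x ∈ I
  mul_right : ∀ a x : TV θ, x ∈ I → x * a ∈ I
  homog_ge2 : I = Submodule.span ℂ {x | x ∈ I ∧ ∃ n, 2 ≤ n ∧ x ∈ homogTot θ n}
  coideal : ∀ x ∈ I, S.Δ x ∈ mixedSub I

/-- The defining ideal `J_q` of the Nichols algebra `B_q = T(V)/J_q`:
the maximal homogeneous braided Hopf ideal generated in degrees `≥ 2`. -/
def Jq (S : BraidedStr θ q) : Submodule ℂ (TV θ) := sSup {I | IsPreNicholsIdeal S I}

/-- The standard filtration of `T(V)`: span of words of length `≤ n`. -/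
def Wfil (θ : ℕ) (n : ℕ) : Submodule ℂ (TV θ) :=
  Submodule.span ℂ {x | ∃ w : List (Fin θ), w.length ≤ n ∧ x = wordElem θ w}

/-- The quotient algebra `T(V)/I` has finite Gelfand–Kirillov dimension, i.e.
the standard filtration of the (finitely generated) quotient has polynomial growth. -/
def FinGK (I : Submodule ℂ (TV θ)) : Prop :=
  ∃ C d : ℕ, ∀ n : ℕ, Module.finrank ℂ ((Wfil θ n).map I.mkQ) ≤ C * (n + 1) ^ d

/-- The Gelfand–Kirillov dimension of the quotient algebra `T(V)/I`. -/
def GKdim (I : Submodule ℂ (TV θ)) : ℝ :=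
  Filter.limsup
    (fun n : ℕ => Real.log (Module.finrank ℂ ((Wfil θ n).map I.mkQ)) / Real.log n)
    Filter.atTop

/-- `I` defines an eminent pre-Nichols algebra: it is a finite-GKdim pre-Nichols
algebra, and every finite-GKdim pre-Nichols algebra of `q` is a quotient of it. -/
def IsEminent (S : BraidedStr θ q) (I : Submodule ℂ (TV θ)) : Prop :=
  IsPreNicholsIdeal S I ∧ FinGK I ∧
    ∀ I' : Submodule ℂ (TV θ), IsPreNicholsIdeal S I' → FinGK I' → I ≤ I'

/-- The Dynkin diagram of the braiding matrix `q`: vertices `Fin θ`, an edge between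
`i ≠ j` iff `q̃_{ij} ≠ 1`. -/
def dynkin {θ : ℕ} (q : Fin θ → Fin θ → ℂˣ) : SimpleGraph (Fin θ) :=
  SimpleGraph.fromRel (fun i j => qtil q i j ≠ 1)

/-- The quantum number `(m)_t = 1 + t + ⋯ + t^{m-1}`. -/
def qnum (t : ℂ) (m : ℕ) : ℂ := ∑ k ∈ Finset.range m, t ^ k

/-- The set of `n ∈ ℕ₀` such that `(n+1)_{q_{ii}} (1 - q_{ii}^n q̃_{ij}) = 0`,
i.e. such that `(ad_c x_i)^{n+1} x_j = 0` in the Nichols algebra.  The entry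
`c_{ij}` of the generalized Cartan matrix is `-(min of this set)`. -/
def cSet {θ : ℕ} (q : Fin θ → Fin θ → ℂˣ) (i j : Fin θ) : Set ℕ :=
  {n | qnum (q i i : ℂ) (n + 1) * (1 - (q i i : ℂ) ^ n * qtil q i j) = 0}

/-- The generalized Cartan matrix of `q`. -/
def cij {θ : ℕ} (q : Fin θ → Fin θ → ℂˣ) (i j : Fin θ) : ℤ :=
  if i = j then 2 else -(Int.ofNat (sInf (cSet q i j)))

/-- All entries `c_{ij}` are defined at the vertex `i`. -/
def reflectable {θ : ℕ} (q : Fin θ → Fin θ → ℂˣ) (i : Fin θ) : Prop :=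
  ∀ j, j ≠ i → (cSet q i j).Nonempty

/-- The `i`-th reflection of the braiding matrix:
`(r_i q)_{jk} = q(s_i α_j, s_i α_k)` where `s_i α_j = α_j - c_{ij} α_i`. -/
def reflectMat {θ : ℕ} (q : Fin θ → Fin θ → ℂˣ) (i : Fin θ) : Fin θ → Fin θ → ℂˣ :=
  fun j k =>
    q j k * q j i ^ (-(cij q i k)) * q i k ^ (-(cij q i j)) * q i i ^ (cij q i j * cij q i k)

/-- The reflection `s_i` acting on `ℤ^θ`. -/
def sRefl {θ : ℕ} (q : Fin θ → Fin θ → ℂˣ) (i : Fin θ) (β : Fin θ → ℤ) : Fin θ → ℤ :=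
  fun k => β k - (if k = i then ∑ j, cij q i j * β j else 0)

/-- The (real) roots of `q`, together with the base points of the Weyl groupoid at
which they live: pairs `(q', β)` obtained from a simple root of `q` by iterated
reflections. -/
inductive ReachRoot {θ : ℕ} (q₀ : Fin θ → Fin θ → ℂˣ) :
    (Fin θ → Fin θ → ℂˣ) → (Fin θ → ℤ) → Prop
  | simple (j : Fin θ) : ReachRoot q₀ q₀ (fun k => if k = j then 1 else 0)
  | reflect {q' : Fin θ → Fin θ → ℂˣ} {β : Fin θ → ℤ} (i : Fin θ) :
      ReachRoot q₀ q' β → ReachRoot q₀ (reflectMat q' i) (sRefl q' i β)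

/-- `q` has a finite (generalized) root system: all reflections are defined at every
point of the Weyl groupoid, and the set of roots so obtained is finite. -/
def FiniteRootSystem {θ : ℕ} (q : Fin θ → Fin θ → ℂˣ) : Prop :=
  (∀ q' i, (∃ β, ReachRoot q q' β) → reflectable q' i) ∧
    Set.Finite {β : Fin θ → ℤ | ∃ q', ReachRoot q q' β}

/-- Conjecture (Andruskiewitsch–Angiono–Heckenberger): the root system of a Nichols
algebra of diagonal type with finite Gelfand–Kirillov dimension is finite. -/
def AAH : Prop :=
  ∀ (θ : ℕ) (q : Fin θ → Fin θ → ℂˣ) (S : BraidedStr θ q), FinGK (Jq S) → FiniteRootSystem q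

/-- The two-sided ideal of `T(V)` generated by a set. -/
def idealGen (θ : ℕ) (s : Set (TV θ)) : Submodule ℂ (TV θ) :=
  Submodule.span ℂ {x | ∃ g ∈ s, ∃ a b : TV θ, x = a * g * b}

end PreNicholsPaper

namespace PreNicholsPaper

/-!
Suppose that `x_{ij}` is nonzero in the pre-Nichols algebra `B = T(V)/I`. Then there is a
functional `η` on the degree two part of `B` with `η(x_{ij}) ≠ 0`. The operators
`∂_i^a ∂_j^b (id ⊗ η)Δ` descend to `B`, and on suitable subalgebras they are skew derivations dual
to the elements `(ad_c x_i)^a (ad_c x_j)^b x_{ij}`. Hence two such elements, or one of them and a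
generator `x_k`, generate a subalgebra of `B` that surjects onto a Nichols algebra of rank two,
whose braiding matrix is the restriction of the bicharacter of `q` to their degrees. It has finite
GKdim as well, so its root system is finite by the AAH conjecture. Whenever the orders of `q_{ii}`
and `q_{jj}` are not the permitted ones, some choice of `a`, `b` yields a rank two diagram with
infinite root system: one with an edge at a vertex labeled `1`, or with an edge `q_{ii}^2` at a
vertex `q_{ii}` of infinite order, or of Cartan type with `c_{12} c_{21} ≥ 4`.
-/

section Words

variable {θ : ℕ}

theorem wordElem_nil : wordElem θ [] = 1 := rfl

theorem wordElem_append (u v : List (Fin θ)) :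
    wordElem θ (u ++ v) = wordElem θ u * wordElem θ v := by
  simp [wordElem]

theorem wordElem_singleton (l : Fin θ) : wordElem θ [l] = gen θ l := by
  simp [wordElem]

/-- The basis of `T(V)` consisting of the words. -/
def wordBasis (θ : ℕ) : Module.Basis (List (Fin θ)) ℂ (TV θ) :=
  (FreeAlgebra.basisFreeMonoid ℂ (Fin θ)).reindex FreeMonoid.toList

theorem wordBasis_apply (w : List (Fin θ)) : wordBasis θ w = wordElem θ w := by
  simp [wordBasis, FreeAlgebra.basisFreeMonoid, FreeAlgebra.equivMonoidAlgebraFreeMonoid,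
    FreeMonoid.lift_apply, wordElem]
  rfl

/-- The functional on `T(V)` giving the coefficient of the word `v`; for `v = []` it is the
counit. -/
def coef (v : List (Fin θ)) : TV θ →ₗ[ℂ] ℂ := (wordBasis θ).coord v

theorem coef_wordElem (v w : List (Fin θ)) :
    coef v (wordElem θ w) = if w = v then 1 else 0 := by
  rw [coef, ← wordBasis_apply, Module.Basis.coord_apply, Module.Basis.repr_self,
    Finsupp.single_apply]

theorem ext_coef {x y : TV θ} (h : ∀ v, coef v x = coef v y) : x = y :=
  (wordBasis θ).ext_elem h

theorem mem_of_wordElem_mem {p : Submodule ℂ (TV θ)} (h : ∀ w, wordElem θ w ∈ p) (x : TV θ) :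
    x ∈ p := by
  have hspan : Submodule.span ℂ (Set.range (wordBasis θ)) ≤ p := by
    rw [Submodule.span_le]
    rintro _ ⟨w, rfl⟩
    exact wordBasis_apply w ▸ h w
  exact hspan ((wordBasis θ).mem_span x)

theorem mem_of_mul_gen_mem {p : Submodule ℂ (TV θ)} (h1 : (1 : TV θ) ∈ p)
    (hmul : ∀ b ∈ p, ∀ l, b * gen θ l ∈ p) (x : TV θ) : x ∈ p := by
  refine mem_of_wordElem_mem (fun w => ?_) x
  induction w using List.reverseRecOn with
  | nil => exact h1
  | append_singleton w l ih =>
    rw [wordElem_append, wordElem_singleton]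
    exact hmul _ ih l

variable {M : Type*} [AddCommGroup M] [Module ℂ M] {f g : TV θ →ₗ[ℂ] M}

theorem ext_wordElem (h : ∀ w, f (wordElem θ w) = g (wordElem θ w)) : f = g :=
  (wordBasis θ).ext fun w => by simpa only [wordBasis_apply] using h w

theorem ext_mul_gen (h1 : f 1 = g 1)
    (hmul : ∀ b l, f b = g b → f (b * gen θ l) = g (b * gen θ l)) : f = g :=
  LinearMap.ext <| mem_of_mul_gen_mem (p := LinearMap.eqLocus f g) h1 fun b hb l => hmul b l hb

end Words

section Coefficients

variable {θ : ℕ}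

theorem coef_one (v : List (Fin θ)) : coef v (1 : TV θ) = if v = [] then 1 else 0 := by
  rw [← wordElem_nil, coef_wordElem]
  simp only [eq_comm]

theorem coef_nil_comp_mulRight_gen (l : Fin θ) :
    coef [] ∘ₗ LinearMap.mulRight ℂ (gen θ l) = 0 :=
  ext_wordElem fun w => by
    simp [← wordElem_singleton, ← wordElem_append, coef_wordElem]

theorem coef_append_comp_mulRight_gen (v : List (Fin θ)) (k l : Fin θ) :
    coef (v ++ [k]) ∘ₗ LinearMap.mulRight ℂ (gen θ l) = if k = l then coef v else 0 :=
  ext_wordElem fun w => by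
    rw [LinearMap.comp_apply, LinearMap.mulRight_apply, ← wordElem_singleton, ← wordElem_append,
      coef_wordElem]
    by_cases h : k = l
    · subst h; simp [coef_wordElem]
    · simp [h, Ne.symm h]

theorem coef_nil_mul (a b : TV θ) : coef [] (a * b) = coef [] a * coef [] b := by
  have h : coef [] ∘ₗ LinearMap.mulLeft ℂ a = coef [] a • coef [] :=
    ext_mul_gen (by simp [coef_one]) fun b l _ => by
      have h0 := LinearMap.congr_fun (coef_nil_comp_mulRight_gen l)
      simp only [LinearMap.comp_apply, LinearMap.mulRight_apply, LinearMap.zero_apply] at h0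
      simp [← mul_assoc, h0]
  exact LinearMap.congr_fun h b

theorem coef_nil_gen (l : Fin θ) : coef [] (gen θ l) = 0 := by
  simp [← wordElem_singleton, coef_wordElem]

/-- The algebra endomorphism of `T(V)` scaling the generator `x_m` by `c m`. -/
def scale (c : Fin θ → ℂ) : TV θ →ₐ[ℂ] TV θ := FreeAlgebra.lift ℂ fun m => c m • gen θ m

theorem scale_gen (c : Fin θ → ℂ) (m : Fin θ) : scale c (gen θ m) = c m • gen θ m := by
  simp [scale, gen]

theorem scale_wordElem (c : Fin θ → ℂ) (w : List (Fin θ)) :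
    scale c (wordElem θ w) = (w.map c).prod • wordElem θ w := by
  induction w using List.reverseRecOn with
  | nil => simp [wordElem_nil]
  | append_singleton w m ih =>
    rw [wordElem_append, map_mul, ih, wordElem_singleton, scale_gen, smul_mul_smul_comm,
      List.map_append, List.prod_append, List.map_singleton, List.prod_singleton]

theorem coef_comp_scale (c : Fin θ → ℂ) (v : List (Fin θ)) :
    coef v ∘ₗ (scale c).toLinearMap = (v.map c).prod • coef v :=
  ext_wordElem fun w => by
    by_cases h : w = v <;> simp [scale_wordElem, coef_wordElem, h]

theorem coef_nil_scale (c : Fin θ → ℂ) (b : TV θ) : coef [] (scale c b) = coef [] b := by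
  simpa using LinearMap.congr_fun (coef_comp_scale c []) b

end Coefficients

section HomogeneousParts

variable {θ : ℕ}

/-- The projection of `T(V)` onto its component of total degree `n`. -/
def homogPart (n : ℕ) : Module.End ℂ (TV θ) :=
  (wordBasis θ).constr ℂ fun w => if w.length = n then wordElem θ w else 0

theorem homogPart_wordElem (n : ℕ) (w : List (Fin θ)) :
    homogPart n (wordElem θ w) = if w.length = n then wordElem θ w else 0 := by
  rw [homogPart, ← wordBasis_apply, Module.Basis.constr_basis, wordBasis_apply]

theorem homogPart_mem_homogTot (n : ℕ) (x : TV θ) : homogPart n x ∈ homogTot θ n := by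
  refine mem_of_wordElem_mem (p := (homogTot θ n).comap (homogPart n)) (fun w => ?_) x
  rw [Submodule.mem_comap, homogPart_wordElem]
  split_ifs with hw
  · exact Submodule.subset_span ⟨w, hw, rfl⟩
  · exact zero_mem _

theorem homogPart_of_mem_homogTot {n : ℕ} (m : ℕ) {x : TV θ} (hx : x ∈ homogTot θ n) :
    homogPart m x = if n = m then x else 0 := by
  have h : Set.EqOn (homogPart m) (if n = m then LinearMap.id else 0 : Module.End ℂ (TV θ))
      (homogTot θ n) := by
    refine LinearMap.eqOn_span ?_
    rintro _ ⟨w, rfl, rfl⟩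
    rw [homogPart_wordElem]
    split_ifs <;> rfl
  rw [h hx]
  split_ifs <;> rfl

theorem coef_homogPart (v : List (Fin θ)) (n : ℕ) (x : TV θ) :
    coef v (homogPart n x) = if v.length = n then coef v x else 0 := by
  have h : coef v ∘ₗ homogPart n = if v.length = n then coef v else 0 := ext_wordElem fun w => by
    rw [LinearMap.comp_apply, homogPart_wordElem]
    by_cases hwv : w = v
    · subst hwv; split_ifs <;> simp
    · split_ifs <;> simp [coef_wordElem, hwv]
  have hx := LinearMap.congr_fun h x
  split_ifs at hx ⊢ <;> exact hx

theorem exists_sum_homogPart_eq (x : TV θ) : ∃ s : Finset ℕ, ∑ n ∈ s, homogPart n x = x := by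
  refine ⟨((wordBasis θ).repr x).support.image List.length, ext_coef fun v => ?_⟩
  simp only [map_sum, coef_homogPart, Finset.sum_ite_eq]
  refine ite_eq_left_iff.2 fun hv => ?_
  by_contra hne
  exact hv (Finset.mem_image_of_mem _ (Finsupp.mem_support_iff.2 (Ne.symm hne)))

end HomogeneousParts

section Bicharacter

variable {θ : ℕ} (q : Fin θ → Fin θ → ℂˣ)

/-- The bicharacter on `ℕ₀^θ` attached to the braiding matrix; `qf` is its value in `ℂ`. -/
def bichar (a b : Fin θ → ℕ) : ℂˣ := ∏ i, ∏ j, q i j ^ (a i * b j)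

theorem coe_bichar (a b : Fin θ → ℕ) : (bichar q a b : ℂ) = qf q a b := by
  simp [bichar, qf]

theorem bichar_add_left (a b c : Fin θ → ℕ) :
    bichar q (a + b) c = bichar q a c * bichar q b c := by
  simp [bichar, ← Finset.prod_mul_distrib, add_mul, pow_add]

theorem bichar_add_right (a b c : Fin θ → ℕ) :
    bichar q a (b + c) = bichar q a b * bichar q a c := by
  simp [bichar, ← Finset.prod_mul_distrib, mul_add, pow_add]

theorem bichar_zero_left (c : Fin θ → ℕ) : bichar q 0 c = 1 := by simp [bichar]

theorem bichar_zero_right (c : Fin θ → ℕ) : bichar q c 0 = 1 := by simp [bichar]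

theorem bichar_nsmul_left (n : ℕ) (a b : Fin θ → ℕ) : bichar q (n • a) b = bichar q a b ^ n := by
  simp [bichar, ← Finset.prod_pow, ← pow_mul, mul_comm, mul_left_comm]

theorem bichar_nsmul_right (n : ℕ) (a b : Fin θ → ℕ) : bichar q a (n • b) = bichar q a b ^ n := by
  simp [bichar, ← Finset.prod_pow, ← pow_mul, mul_comm, mul_left_comm]

theorem bichar_δ (k l : Fin θ) : bichar q (δ θ k) (δ θ l) = q k l := by
  simp [bichar, δ, pow_ite]

/-- The braiding matrix obtained by evaluating the bicharacter of `q` on the degrees `d`. -/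
def restrict {n : ℕ} (d : Fin n → Fin θ → ℕ) : Fin n → Fin n → ℂˣ :=
  fun u v => bichar q (d u) (d v)

theorem degW_nil : degW θ [] = 0 := by ext; simp [degW]

theorem degW_append (u v : List (Fin θ)) : degW θ (u ++ v) = degW θ u + degW θ v := by
  ext; simp [degW]

theorem degW_singleton (l : Fin θ) : degW θ [l] = δ θ l := by
  ext k
  by_cases h : l = k
  · simp [degW, δ, h]
  · simp [degW, δ, h, Ne.symm h]

theorem prod_map_eq_bichar_degW_left (w : List (Fin θ)) (l : Fin θ) :
    (w.map fun m => (q m l : ℂ)).prod = bichar q (degW θ w) (δ θ l) := by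
  induction w using List.reverseRecOn with
  | nil => simp [degW_nil, bichar_zero_left]
  | append_singleton w m ih =>
    simp [degW_append, degW_singleton, bichar_add_left, bichar_δ, ih]

theorem prod_map_eq_bichar_degW_right (w : List (Fin θ)) (l : Fin θ) :
    (w.map fun m => (q l m : ℂ)).prod = bichar q (δ θ l) (degW θ w) := by
  induction w using List.reverseRecOn with
  | nil => simp [degW_nil, bichar_zero_right]
  | append_singleton w m ih =>
    simp [degW_append, degW_singleton, bichar_add_right, bichar_δ, ih]

/-- The algebra automorphism `y ↦ q(α_l, deg y) y` of `T(V)`. -/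
def sigma (l : Fin θ) : TV θ →ₐ[ℂ] TV θ := scale fun m => (q l m : ℂ)

/-- The algebra automorphism `y ↦ q(deg y, α_l) y` of `T(V)`. -/
def rho (l : Fin θ) : TV θ →ₐ[ℂ] TV θ := scale fun m => (q m l : ℂ)

theorem sigma_gen (l m : Fin θ) : sigma q l (gen θ m) = (q l m : ℂ) • gen θ m := scale_gen _ _

theorem rho_gen (l m : Fin θ) : rho q l (gen θ m) = (q m l : ℂ) • gen θ m := scale_gen _ _

theorem rho_wordElem (l : Fin θ) (w : List (Fin θ)) :
    rho q l (wordElem θ w) = (bichar q (degW θ w) (δ θ l) : ℂ) • wordElem θ w := by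
  rw [rho, scale_wordElem, prod_map_eq_bichar_degW_left]

theorem xw_pair (i j : Fin θ) :
    xw q [i, j] = gen θ i * gen θ j - (q i j : ℂ) • (gen θ j * gen θ i) := by
  simp [xw, ad1, brk, degW_singleton, ← coe_bichar, bichar_δ]

end Bicharacter

section Multidegree

variable {θ : ℕ} {q : Fin θ → Fin θ → ℂˣ} {a b : Fin θ → ℕ} {x y : TV θ}

theorem gen_mem_homogD (l : Fin θ) : gen θ l ∈ homogD θ (δ θ l) :=
  Submodule.subset_span ⟨[l], degW_singleton l, (wordElem_singleton l).symm⟩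

theorem mul_mem_homogD (hx : x ∈ homogD θ a) (hy : y ∈ homogD θ b) :
    x * y ∈ homogD θ (a + b) := by
  have h := Submodule.mul_mem_mul hx hy
  rw [homogD, homogD, Submodule.span_mul_span] at h
  refine Submodule.span_mono ?_ h
  rintro _ ⟨_, ⟨u, rfl, rfl⟩, _, ⟨v, rfl, rfl⟩, rfl⟩
  exact ⟨u ++ v, degW_append u v, (wordElem_append u v).symm⟩

theorem brk_mem_homogD (hx : x ∈ homogD θ a) (hy : y ∈ homogD θ b) :
    brk q a b x y ∈ homogD θ (a + b) :=
  sub_mem (mul_mem_homogD hx hy)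
    (Submodule.smul_mem _ _ (add_comm a b ▸ mul_mem_homogD hy hx))

theorem ad1_mem_homogD (l : Fin θ) (hy : y ∈ homogD θ b) : ad1 q l b y ∈ homogD θ (δ θ l + b) :=
  brk_mem_homogD (gen_mem_homogD l) hy

theorem xw_pair_mem_homogD (i j : Fin θ) : xw q [i, j] ∈ homogD θ (δ θ i + δ θ j) := by
  have h := ad1_mem_homogD (q := q) i (gen_mem_homogD j)
  rwa [← degW_singleton j] at h ⊢

theorem sigma_of_mem_homogD (l : Fin θ) (hy : y ∈ homogD θ b) :
    sigma q l y = (bichar q (δ θ l) b : ℂ) • y := by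
  have h : homogD θ b ≤ LinearMap.eqLocus (sigma q l).toLinearMap
      ((bichar q (δ θ l) b : ℂ) • LinearMap.id) := by
    rw [homogD, Submodule.span_le]
    rintro _ ⟨w, rfl, rfl⟩
    change scale _ (wordElem θ w) = _
    rw [scale_wordElem, prod_map_eq_bichar_degW_right]
    rfl
  exact h hy

theorem coef_nil_of_mem_homogD (hb : b ≠ 0) (hy : y ∈ homogD θ b) : coef [] y = 0 := by
  have h : homogD θ b ≤ LinearMap.ker (coef []) := by
    rw [homogD, Submodule.span_le]
    rintro _ ⟨w, rfl, rfl⟩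
    rw [SetLike.mem_coe, LinearMap.mem_ker, coef_wordElem, if_neg]
    rintro rfl
    exact hb degW_nil
  exact h hy

end Multidegree

section Coproduct

variable {θ : ℕ} {q : Fin θ → Fin θ → ℂˣ} (S : BraidedStr θ q)

variable (q) in
/-- Right multiplication by `Δ(x_l) = x_l ⊗ 1 + 1 ⊗ x_l` in the braided tensor square of `T(V)`. -/
def mulComulGen (l : Fin θ) : TV θ ⊗[ℂ] TV θ →ₗ[ℂ] TV θ ⊗[ℂ] TV θ :=
  TensorProduct.map (LinearMap.mulRight ℂ (gen θ l)) (rho q l).toLinearMap +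
    LinearMap.lTensor (TV θ) (LinearMap.mulRight ℂ (gen θ l))

theorem mulComulGen_tmul (l : Fin θ) (x y : TV θ) :
    mulComulGen q l (x ⊗ₜ[ℂ] y) = (x * gen θ l) ⊗ₜ[ℂ] rho q l y + x ⊗ₜ[ℂ] (y * gen θ l) := rfl

theorem comul_mul_gen (b : TV θ) (l : Fin θ) :
    S.Δ (b * gen θ l) = mulComulGen q l (S.Δ b) := by
  have h : S.mulB.flip (gen θ l ⊗ₜ[ℂ] 1 + 1 ⊗ₜ[ℂ] gen θ l) = mulComulGen q l := by
    refine TensorProduct.ext (LinearMap.ext fun a => ext_wordElem fun w => ?_)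
    have h₁ := S.mulB_spec a 1 w [l]
    have h₂ := S.mulB_spec a (gen θ l) w []
    rw [wordElem_singleton, degW_singleton, ← coe_bichar, mul_one] at h₁
    rw [wordElem_nil, degW_nil, ← coe_bichar, bichar_zero_right, Units.val_one, one_smul,
      mul_one] at h₂
    simp only [LinearMap.compr₂ₛₗ_apply, TensorProduct.mk_apply, map_add, LinearMap.add_apply,
      LinearMap.flip_apply, h₁, h₂, mulComulGen_tmul, rho_wordElem, TensorProduct.tmul_smul]
  rw [S.Δ_mul, S.Δ_gen, ← h, LinearMap.flip_apply]

/-- The operator `(id ⊗ f) Δ` on `T(V)`. -/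
def act : (TV θ →ₗ[ℂ] ℂ) →ₗ[ℂ] Module.End ℂ (TV θ) where
  toFun f := (TensorProduct.rid ℂ (TV θ)).toLinearMap ∘ₗ LinearMap.lTensor (TV θ) f ∘ₗ S.Δ
  map_add' f g := by simp [LinearMap.lTensor_add, LinearMap.add_comp, LinearMap.comp_add]
  map_smul' c f := by simp [LinearMap.lTensor_smul, LinearMap.smul_comp, LinearMap.comp_smul]

/-- The operator `(f ⊗ id) Δ` on `T(V)`. -/
def actLeft (f : TV θ →ₗ[ℂ] ℂ) : Module.End ℂ (TV θ) :=
  (TensorProduct.lid ℂ (TV θ)).toLinearMap ∘ₗ LinearMap.rTensor (TV θ) f ∘ₗ S.Δ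

theorem act_apply (f : TV θ →ₗ[ℂ] ℂ) (x : TV θ) :
    act S f x = TensorProduct.rid ℂ (TV θ) (LinearMap.lTensor (TV θ) f (S.Δ x)) := rfl

theorem actLeft_apply (f : TV θ →ₗ[ℂ] ℂ) (x : TV θ) :
    actLeft S f x = TensorProduct.lid ℂ (TV θ) (LinearMap.rTensor (TV θ) f (S.Δ x)) := rfl

theorem act_one (f : TV θ →ₗ[ℂ] ℂ) : act S f 1 = f 1 • 1 := by
  simp [act_apply, S.Δ_one]

theorem act_mul_gen (f : TV θ →ₗ[ℂ] ℂ) (b : TV θ) (l : Fin θ) :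
    act S f (b * gen θ l) =
      act S (f ∘ₗ (rho q l).toLinearMap) b * gen θ l +
      act S (f ∘ₗ LinearMap.mulRight ℂ (gen θ l)) b := by
  simp only [act_apply, comul_mul_gen]
  induction S.Δ b with
  | zero => simp
  | tmul x y => simp [mulComulGen_tmul]
  | add x y hx hy => simp only [map_add, add_mul, hx, hy]; abel

theorem actLeft_mul_gen (f : TV θ →ₗ[ℂ] ℂ) (b : TV θ) (l : Fin θ) :
    actLeft S f (b * gen θ l) =
      rho q l (actLeft S (f ∘ₗ LinearMap.mulRight ℂ (gen θ l)) b) +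
      actLeft S f b * gen θ l := by
  simp only [actLeft_apply, comul_mul_gen]
  induction S.Δ b with
  | zero => simp
  | tmul x y => simp [mulComulGen_tmul]
  | add x y hx hy => simp only [map_add, add_mul, hx, hy]; abel

theorem act_coef_nil : act S (coef []) = LinearMap.id :=
  ext_mul_gen (by simp [act_one, coef_one]) fun b l h => by
    have hscale : coef [] ∘ₗ (rho q l).toLinearMap = coef [] := LinearMap.ext (coef_nil_scale _)
    rw [act_mul_gen, hscale, coef_nil_comp_mulRight_gen, map_zero, h]
    simp

theorem actLeft_coef_nil : actLeft S (coef []) = LinearMap.id :=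
  ext_mul_gen (by simp [actLeft_apply, S.Δ_one, coef_one]) fun b l h => by
    rw [actLeft_mul_gen, coef_nil_comp_mulRight_gen, h]
    simp [actLeft_apply]

end Coproduct

section WordDerivations

variable {θ : ℕ} {q : Fin θ → Fin θ → ℂˣ} (S : BraidedStr θ q)

/-- The operator `(id ⊗ v^*) Δ` on `T(V)`, where `v^*` is the functional dual to the word `v`. For
`v = [k]` this is the right skew derivation `∂_k`. -/
def wordDeriv (v : List (Fin θ)) : Module.End ℂ (TV θ) := act S (coef v)

theorem wordDeriv_nil (b : TV θ) : wordDeriv S [] b = b :=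
  LinearMap.congr_fun (act_coef_nil S) b

theorem wordDeriv_one {v : List (Fin θ)} (hv : v ≠ []) : wordDeriv S v 1 = 0 := by
  simp [wordDeriv, act_one, coef_one, hv]

theorem wordDeriv_append_mul_gen (v : List (Fin θ)) (k : Fin θ) (b : TV θ) (l : Fin θ) :
    wordDeriv S (v ++ [k]) (b * gen θ l) =
      ((v ++ [k]).map fun m => (q m l : ℂ)).prod • (wordDeriv S (v ++ [k]) b * gen θ l) +
        if k = l then wordDeriv S v b else 0 := by
  rw [wordDeriv, act_mul_gen, rho, coef_comp_scale, coef_append_comp_mulRight_gen, map_smul]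
  split_ifs <;> simp [wordDeriv]

theorem wordDeriv_singleton_mul_gen (k : Fin θ) (b : TV θ) (l : Fin θ) :
    wordDeriv S [k] (b * gen θ l) =
      (q k l : ℂ) • (wordDeriv S [k] b * gen θ l) + if k = l then b else 0 := by
  simpa [wordDeriv_nil] using wordDeriv_append_mul_gen S [] k b l

theorem wordDeriv_pair_mul_gen (m n : Fin θ) (b : TV θ) (l : Fin θ) :
    wordDeriv S [m, n] (b * gen θ l) =
      ((q m l : ℂ) * q n l) • (wordDeriv S [m, n] b * gen θ l) +
        if n = l then wordDeriv S [m] b else 0 := by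
  simpa using wordDeriv_append_mul_gen S [m] n b l

theorem wordDeriv_singleton_gen (k l : Fin θ) :
    wordDeriv S [k] (gen θ l) = if k = l then 1 else 0 := by
  simpa [wordDeriv_one] using wordDeriv_singleton_mul_gen S k 1 l

theorem wordDeriv_pair_gen (m n l : Fin θ) : wordDeriv S [m, n] (gen θ l) = 0 := by
  simpa [wordDeriv_one] using wordDeriv_pair_mul_gen S m n 1 l

theorem wordDeriv_singleton_mul (k : Fin θ) (a b : TV θ) :
    wordDeriv S [k] (a * b) = a * wordDeriv S [k] b + wordDeriv S [k] a * sigma q k b := by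
  have h : wordDeriv S [k] ∘ₗ LinearMap.mulLeft ℂ a =
      LinearMap.mulLeft ℂ a ∘ₗ wordDeriv S [k] +
        LinearMap.mulLeft ℂ (wordDeriv S [k] a) ∘ₗ (sigma q k).toLinearMap := by
    refine ext_mul_gen (by simp [wordDeriv_one]) fun b l h => ?_
    simp only [LinearMap.comp_apply, LinearMap.mulLeft_apply, LinearMap.add_apply,
      AlgHom.toLinearMap_apply] at h ⊢
    rw [← mul_assoc, wordDeriv_singleton_mul_gen, h, wordDeriv_singleton_mul_gen, map_mul,
      sigma_gen]
    split_ifs <;> simp [mul_add, add_mul, mul_assoc]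
    abel
  exact LinearMap.congr_fun h b

theorem wordDeriv_pair_mul (m n : Fin θ) (a b : TV θ) :
    wordDeriv S [m, n] (a * b) =
      a * wordDeriv S [m, n] b + wordDeriv S [m] a * sigma q m (wordDeriv S [n] b) +
        wordDeriv S [m, n] a * sigma q m (sigma q n b) := by
  have h : wordDeriv S [m, n] ∘ₗ LinearMap.mulLeft ℂ a =
      LinearMap.mulLeft ℂ a ∘ₗ wordDeriv S [m, n] +
        LinearMap.mulLeft ℂ (wordDeriv S [m] a) ∘ₗ (sigma q m).toLinearMap ∘ₗ wordDeriv S [n] +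
        LinearMap.mulLeft ℂ (wordDeriv S [m, n] a) ∘ₗ
          (sigma q m).toLinearMap ∘ₗ (sigma q n).toLinearMap := by
    refine ext_mul_gen (by simp [wordDeriv_one]) fun b l h => ?_
    simp only [LinearMap.comp_apply, LinearMap.mulLeft_apply, LinearMap.add_apply,
      AlgHom.toLinearMap_apply] at h ⊢
    rw [← mul_assoc, wordDeriv_pair_mul_gen, h, wordDeriv_pair_mul_gen,
      wordDeriv_singleton_mul_gen, wordDeriv_singleton_mul, map_mul, sigma_gen]
    split_ifs <;>
      simp only [mul_add, add_mul, mul_assoc, map_add, map_mul, map_smul, sigma_gen, smul_add,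
        mul_smul_comm, smul_smul, mul_comm (q n l : ℂ), add_zero]
    abel
  exact LinearMap.congr_fun h b

theorem wordDeriv_singleton_scale (c : Fin θ → ℂ) (k : Fin θ) (b : TV θ) :
    wordDeriv S [k] (scale c b) = c k • scale c (wordDeriv S [k] b) := by
  have h : wordDeriv S [k] ∘ₗ (scale c).toLinearMap =
      c k • (scale c).toLinearMap ∘ₗ wordDeriv S [k] := by
    refine ext_mul_gen (by simp [wordDeriv_one]) fun b l h => ?_
    simp only [LinearMap.comp_apply, LinearMap.smul_apply, AlgHom.toLinearMap_apply] at h ⊢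
    rw [map_mul, scale_gen, mul_smul_comm, map_smul, wordDeriv_singleton_mul_gen,
      wordDeriv_singleton_mul_gen, h]
    by_cases hk : k = l
    · subst hk
      simp only [if_true, map_add, map_smul, map_mul, scale_gen, smul_add, mul_smul_comm,
        smul_mul_assoc]
    · simp only [if_neg hk, add_zero, map_smul, map_mul, scale_gen, mul_smul_comm,
        smul_mul_assoc, smul_smul]
      congr 1
      ring
  exact LinearMap.congr_fun h b

theorem lTensor_wordDeriv_mulComulGen (k l : Fin θ) (t : TV θ ⊗[ℂ] TV θ) :
    LinearMap.lTensor (TV θ) (wordDeriv S [k]) (mulComulGen q l t) =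
      (q k l : ℂ) • mulComulGen q l (LinearMap.lTensor (TV θ) (wordDeriv S [k]) t) +
        if k = l then t else 0 := by
  induction t with
  | zero => simp
  | tmul x y =>
    simp only [mulComulGen_tmul, map_add, LinearMap.lTensor_tmul, rho, wordDeriv_singleton_scale,
      wordDeriv_singleton_mul_gen]
    split_ifs <;> simp [TensorProduct.tmul_add, TensorProduct.tmul_smul, add_assoc]
  | add x y hx hy =>
    simp only [map_add, smul_add, hx, hy]
    split_ifs <;> abel

/-- Coassociativity of `Δ`, evaluated at `∂_k` on the last tensor factor. -/
theorem lTensor_wordDeriv_comul (k : Fin θ) (b : TV θ) :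
    LinearMap.lTensor (TV θ) (wordDeriv S [k]) (S.Δ b) = S.Δ (wordDeriv S [k] b) := by
  have h : LinearMap.lTensor (TV θ) (wordDeriv S [k]) ∘ₗ S.Δ = S.Δ ∘ₗ wordDeriv S [k] := by
    refine ext_mul_gen (by simp [S.Δ_one, wordDeriv_one]) fun b l h => ?_
    simp only [LinearMap.comp_apply] at h ⊢
    rw [comul_mul_gen, lTensor_wordDeriv_mulComulGen, h, wordDeriv_singleton_mul_gen, map_add,
      map_smul, comul_mul_gen]
    split_ifs <;> simp
  exact LinearMap.congr_fun h b

end WordDerivations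

section Existence

variable {θ : ℕ} (q : Fin θ → Fin θ → ℂˣ)

/-- The basis of `T(V) ⊗ T(V)` consisting of tensors of words. -/
def wordTensorBasis (θ : ℕ) :
    Module.Basis (List (Fin θ) × List (Fin θ)) ℂ (TV θ ⊗[ℂ] TV θ) :=
  (wordBasis θ).tensorProduct (wordBasis θ)

theorem wordTensorBasis_apply (p : List (Fin θ) × List (Fin θ)) :
    wordTensorBasis θ p = wordElem θ p.1 ⊗ₜ[ℂ] wordElem θ p.2 := by
  rw [wordTensorBasis, Module.Basis.tensorProduct_apply', wordBasis_apply, wordBasis_apply]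

/-- The multiplication of the braided tensor square of `T(V)`. -/
def braidedMul : TV θ ⊗[ℂ] TV θ →ₗ[ℂ] TV θ ⊗[ℂ] TV θ →ₗ[ℂ] TV θ ⊗[ℂ] TV θ :=
  (wordTensorBasis θ).constr ℂ fun p => (wordTensorBasis θ).constr ℂ fun r =>
    (bichar q (degW θ p.2) (degW θ r.1) : ℂ) •
      ((wordElem θ p.1 * wordElem θ r.1) ⊗ₜ[ℂ] (wordElem θ p.2 * wordElem θ r.2))

theorem braidedMul_wordElem_tmul (a b c d : List (Fin θ)) :
    braidedMul q (wordElem θ a ⊗ₜ[ℂ] wordElem θ b) (wordElem θ c ⊗ₜ[ℂ] wordElem θ d) =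
      (bichar q (degW θ b) (degW θ c) : ℂ) •
        ((wordElem θ a * wordElem θ c) ⊗ₜ[ℂ] (wordElem θ b * wordElem θ d)) := by
  rw [← wordTensorBasis_apply (a, b), ← wordTensorBasis_apply (c, d), braidedMul,
    Module.Basis.constr_basis, Module.Basis.constr_basis]

theorem braidedMul_tmul_wordElem (a d : TV θ) (b c : List (Fin θ)) :
    braidedMul q (a ⊗ₜ[ℂ] wordElem θ b) (wordElem θ c ⊗ₜ[ℂ] d) =
      (bichar q (degW θ b) (degW θ c) : ℂ) •
        ((a * wordElem θ c) ⊗ₜ[ℂ] (wordElem θ b * d)) := by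
  have h : (braidedMul q).compl₁₂ ((TensorProduct.mk ℂ (TV θ) (TV θ)).flip (wordElem θ b))
      (TensorProduct.mk ℂ (TV θ) (TV θ) (wordElem θ c)) =
      (bichar q (degW θ b) (degW θ c) : ℂ) • (TensorProduct.mk ℂ (TV θ) (TV θ)).compl₁₂
        (LinearMap.mulRight ℂ (wordElem θ c)) (LinearMap.mulLeft ℂ (wordElem θ b)) :=
    ext_wordElem fun a => ext_wordElem fun d => braidedMul_wordElem_tmul q a b c d
  exact LinearMap.congr_fun (LinearMap.congr_fun h a) d

theorem braidedMul_mulComulGen (l : Fin θ) (s t : TV θ ⊗[ℂ] TV θ) :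
    braidedMul q s (mulComulGen q l t) = mulComulGen q l (braidedMul q s t) := by
  have h : (braidedMul q).compl₂ (mulComulGen q l) = (braidedMul q).compr₂ (mulComulGen q l) := by
    refine (wordTensorBasis θ).ext fun ⟨a, b⟩ => (wordTensorBasis θ).ext fun ⟨c, d⟩ => ?_
    simp only [LinearMap.compl₂_apply, LinearMap.compr₂_apply, wordTensorBasis_apply,
      mulComulGen_tmul, rho_wordElem, TensorProduct.tmul_smul, ← wordElem_singleton, map_add,
      map_smul, braidedMul_wordElem_tmul, ← wordElem_append, degW_append, bichar_add_left,
      bichar_add_right, degW_singleton, smul_add, smul_smul, List.append_assoc, Units.val_mul]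
    congr 2
    ring
  exact LinearMap.congr_fun (LinearMap.congr_fun h s) t

theorem braidedMul_one_right (s : TV θ ⊗[ℂ] TV θ) : braidedMul q s (1 ⊗ₜ[ℂ] 1) = s := by
  have h : (braidedMul q).flip (1 ⊗ₜ[ℂ] 1) = LinearMap.id := by
    refine (wordTensorBasis θ).ext fun ⟨a, b⟩ => ?_
    have := braidedMul_wordElem_tmul q a b [] []
    simpa [wordTensorBasis_apply, wordElem_nil, degW_nil, bichar_zero_right] using this
  exact LinearMap.congr_fun h s

/-- The braided coproduct of `T(V)`, defined on words letter by letter. -/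
def comul : TV θ →ₗ[ℂ] TV θ ⊗[ℂ] TV θ :=
  (wordBasis θ).constr ℂ fun w => w.foldl (fun t l => mulComulGen q l t) (1 ⊗ₜ[ℂ] 1)

theorem comul_wordElem (w : List (Fin θ)) :
    comul q (wordElem θ w) = w.foldl (fun t l => mulComulGen q l t) (1 ⊗ₜ[ℂ] 1) := by
  rw [← wordBasis_apply, comul, Module.Basis.constr_basis]

theorem comul_one : comul q 1 = 1 ⊗ₜ[ℂ] 1 := comul_wordElem q []

theorem comul_apply_mul_gen (b : TV θ) (l : Fin θ) :
    comul q (b * gen θ l) = mulComulGen q l (comul q b) := by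
  have h : comul q ∘ₗ LinearMap.mulRight ℂ (gen θ l) = mulComulGen q l ∘ₗ comul q :=
    ext_wordElem fun w => by
      rw [LinearMap.comp_apply, LinearMap.mulRight_apply, ← wordElem_singleton, ← wordElem_append,
        comul_wordElem, List.foldl_append, LinearMap.comp_apply, comul_wordElem]
      rfl
  exact LinearMap.congr_fun h b

/-- The braided bialgebra structure on `T(V)`. -/
def braidedStr : BraidedStr θ q where
  Δ := comul q
  mulB := braidedMul q
  mulB_spec a d b c := by rw [braidedMul_tmul_wordElem, coe_bichar]
  Δ_one := comul_one q
  Δ_gen i := by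
    rw [← one_mul (gen θ i), comul_apply_mul_gen, comul_one, mulComulGen_tmul, map_one]
  Δ_mul u v := by
    have h : comul q ∘ₗ LinearMap.mulLeft ℂ u = braidedMul q (comul q u) ∘ₗ comul q := by
      refine ext_mul_gen (by simp [comul_one, braidedMul_one_right]) fun b l h => ?_
      simp only [LinearMap.comp_apply, LinearMap.mulLeft_apply] at h ⊢
      rw [← mul_assoc, comul_apply_mul_gen, h, comul_apply_mul_gen, braidedMul_mulComulGen]
    exact LinearMap.congr_fun h v

end Existence

section TensorProducts

theorem tensor_eq_zero_of_contractions {K A B ι : Type*} [Field K] [AddCommGroup A] [Module K A]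
    [AddCommGroup B] [Module K B] {f : ι → B →ₗ[K] K} (hf : ∀ b, (∀ u, f u b = 0) → b = 0)
    {z : A ⊗[K] B} (hz : ∀ u, TensorProduct.rid K A (LinearMap.lTensor A (f u) z) = 0) :
    z = 0 := by
  classical
  let e := Module.Basis.ofVectorSpace K A
  have hcoord (w : A ⊗[K] B) i u : f u (TensorProduct.equivFinsuppOfBasisLeft e w i) =
      e.repr (TensorProduct.rid K A (LinearMap.lTensor A (f u) w)) i := by
    induction w with
    | zero => simp
    | tmul a b => simp [mul_comm]
    | add x y hx hy => simp only [map_add, Finsupp.add_apply, hx, hy]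
  refine (TensorProduct.equivFinsuppOfBasisLeft e).injective (Finsupp.ext fun i => ?_)
  rw [map_zero]
  exact hf _ fun u => by rw [hcoord, hz, map_zero, Finsupp.zero_apply]

theorem rid_lTensor_liftQ_map_mkQ {R A B : Type*} [CommRing R] [AddCommGroup A] [Module R A]
    [AddCommGroup B] [Module R B] (M : Submodule R A) (N : Submodule R B) (f : B →ₗ[R] R)
    (hf : N ≤ LinearMap.ker f) (t : A ⊗[R] B) :
    TensorProduct.rid R _ (LinearMap.lTensor _ (N.liftQ f hf)
      (TensorProduct.map M.mkQ N.mkQ t)) =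
      M.mkQ (TensorProduct.rid R _ (LinearMap.lTensor _ f t)) := by
  induction t with
  | zero => simp
  | tmul a b => simp
  | add a b ha hb => simp only [map_add, ha, hb]

theorem ker_map_mkQ_le_mixedSub {θ : ℕ} (I : Submodule ℂ (TV θ)) :
    LinearMap.ker (TensorProduct.map I.mkQ I.mkQ) ≤ mixedSub I := by
  rw [TensorProduct.map_ker (LinearMap.exact_subtype_mkQ I) (Submodule.mkQ_surjective I)
    (LinearMap.exact_subtype_mkQ I) (Submodule.mkQ_surjective I), sup_le_iff]
  constructor
  · rintro _ ⟨t, rfl⟩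
    induction t with
    | zero => simp
    | tmul a b => exact Submodule.subset_span (Or.inr ⟨a, b, b.2, rfl⟩)
    | add x y hx hy => rw [map_add]; exact add_mem hx hy
  · rintro _ ⟨t, rfl⟩
    induction t with
    | zero => simp
    | tmul a b => exact Submodule.subset_span (Or.inl ⟨a, b, a.2, rfl⟩)
    | add x y hx hy => rw [map_add]; exact add_mem hx hy

end TensorProducts

section IteratedDerivations

variable {θ : ℕ} {q : Fin θ → Fin θ → ℂˣ} (S : BraidedStr θ q)

/-- The composition of the skew derivations along a word, the first letter being applied first. -/
def iterDeriv : List (Fin θ) → Module.End ℂ (TV θ)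
  | [] => LinearMap.id
  | k :: u => iterDeriv u ∘ₗ wordDeriv S [k]

theorem iterDeriv_cons (k : Fin θ) (u : List (Fin θ)) (x : TV θ) :
    iterDeriv S (k :: u) x = iterDeriv S u (wordDeriv S [k] x) := rfl

theorem iterDeriv_scale (c : Fin θ → ℂ) (u : List (Fin θ)) (x : TV θ) :
    iterDeriv S u (scale c x) = (u.map c).prod • scale c (iterDeriv S u x) := by
  induction u generalizing x with
  | nil => simp [iterDeriv]
  | cons k u ih =>
    rw [iterDeriv_cons, wordDeriv_singleton_scale, map_smul, ih, smul_smul, List.map_cons,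
      List.prod_cons, iterDeriv_cons]

theorem coef_nil_iterDeriv_scale (c : Fin θ → ℂ) (u : List (Fin θ)) (x : TV θ) :
    coef [] (iterDeriv S u (scale c x)) = (u.map c).prod * coef [] (iterDeriv S u x) := by
  rw [iterDeriv_scale, map_smul, coef_nil_scale, smul_eq_mul]

theorem coef_nil_iterDeriv_wordElem_of_length_ne {u w : List (Fin θ)} (h : w.length ≠ u.length) :
    coef [] (iterDeriv S u (wordElem θ w)) = 0 := by
  -- scaling all generators by 2 multiplies the left side by both `2 ^ |w|` and `2 ^ |u|`
  have hscale := coef_nil_iterDeriv_scale S (fun _ => 2) u (wordElem θ w)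
  simp only [scale_wordElem, map_smul, List.map_const', List.prod_replicate, smul_eq_mul] at hscale
  by_contra hne
  refine h (Nat.pow_right_injective le_rfl ?_)
  exact_mod_cast mul_right_cancel₀ hne hscale

theorem coef_nil_iterDeriv_homogPart (u : List (Fin θ)) (n : ℕ) (x : TV θ) :
    coef [] (iterDeriv S u (homogPart n x)) =
      if u.length = n then coef [] (iterDeriv S u x) else 0 := by
  have h : coef [] ∘ₗ iterDeriv S u ∘ₗ homogPart n =
      if u.length = n then coef [] ∘ₗ iterDeriv S u else 0 := ext_wordElem fun w => by
    rw [LinearMap.comp_apply, LinearMap.comp_apply, homogPart_wordElem]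
    by_cases hw : w.length = u.length
    · rw [hw]; split_ifs <;> simp
    · have h0 := coef_nil_iterDeriv_wordElem_of_length_ne S hw
      split_ifs <;> simp [h0]
  have hx := LinearMap.congr_fun h x
  split_ifs at hx ⊢ <;> exact hx

theorem coef_nil_wordDeriv_singleton (k : Fin θ) (b : TV θ) :
    coef [] (wordDeriv S [k] b) = coef [k] b := by
  have h : coef [] ∘ₗ wordDeriv S [k] = coef [k] := by
    refine ext_mul_gen (by simp [wordDeriv_one, coef_one]) fun b l _ => ?_
    have hl := LinearMap.congr_fun (coef_append_comp_mulRight_gen [] k l) b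
    rw [LinearMap.comp_apply, LinearMap.mulRight_apply, List.nil_append] at hl
    rw [LinearMap.comp_apply, wordDeriv_singleton_mul_gen, map_add, map_smul, coef_nil_mul,
      coef_nil_gen, mul_zero, smul_zero, zero_add, hl]
    split_ifs <;> simp
  exact LinearMap.congr_fun h b

theorem act_coef_nil_comp_iterDeriv (u : List (Fin θ)) :
    act S (coef [] ∘ₗ iterDeriv S u) = iterDeriv S u := by
  have h (x : TV θ) :
      LinearMap.lTensor (TV θ) (iterDeriv S u) (S.Δ x) = S.Δ (iterDeriv S u x) := by
    induction u generalizing x with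
    | nil => simp [iterDeriv]
    | cons k u ih =>
      rw [iterDeriv, LinearMap.lTensor_comp, LinearMap.comp_apply, lTensor_wordDeriv_comul, ih]
      rfl
  refine LinearMap.ext fun x => ?_
  rw [act_apply, LinearMap.lTensor_comp, LinearMap.comp_apply, h, ← act_apply, act_coef_nil,
    LinearMap.id_apply]

end IteratedDerivations

section Radical

variable {θ : ℕ} {q : Fin θ → Fin θ → ℂˣ} {S : BraidedStr θ q}

variable (S) in
/-- The elements of `T(V)` all of whose iterated skew derivatives have zero constant term. It is
the radical of the canonical pairing, and is in fact equal to `J_q`. -/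
def radical : Submodule ℂ (TV θ) := ⨅ u, LinearMap.ker (coef [] ∘ₗ iterDeriv S u)

theorem mem_radical {x : TV θ} : x ∈ radical S ↔ ∀ u, coef [] (iterDeriv S u x) = 0 := by
  simp [radical]

theorem radical_le_ker (u : List (Fin θ)) :
    radical S ≤ LinearMap.ker (coef [] ∘ₗ iterDeriv S u) := iInf_le _ u

variable {x : TV θ}

theorem wordDeriv_mem_radical (hx : x ∈ radical S) (k : Fin θ) :
    wordDeriv S [k] x ∈ radical S :=
  mem_radical.2 fun u => mem_radical.1 hx (k :: u)

theorem iterDeriv_mem_radical (hx : x ∈ radical S) (u : List (Fin θ)) :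
    iterDeriv S u x ∈ radical S := by
  induction u generalizing x with
  | nil => exact hx
  | cons k _ ih => exact ih (wordDeriv_mem_radical hx k)

theorem scale_mem_radical (c : Fin θ → ℂ) (hx : x ∈ radical S) : scale c x ∈ radical S :=
  mem_radical.2 fun u => by rw [coef_nil_iterDeriv_scale, mem_radical.1 hx, mul_zero]

theorem homogPart_mem_radical (n : ℕ) (hx : x ∈ radical S) : homogPart n x ∈ radical S :=
  mem_radical.2 fun u => by rw [coef_nil_iterDeriv_homogPart, mem_radical.1 hx, ite_self]

theorem coef_eq_zero_of_mem_radical (hx : x ∈ radical S) {v : List (Fin θ)} (hv : v.length < 2) :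
    coef v x = 0 := by
  match v, hv with
  | [], _ => exact mem_radical.1 hx []
  | [k], _ => rw [← coef_nil_wordDeriv_singleton S]; exact mem_radical.1 hx [k]

theorem homogPart_eq_zero_of_mem_radical (hx : x ∈ radical S) {n : ℕ} (hn : n < 2) :
    homogPart n x = 0 :=
  ext_coef fun v => by
    rw [coef_homogPart, map_zero]
    exact ite_eq_right_iff.2 fun hv => coef_eq_zero_of_mem_radical hx (hv ▸ hn)

theorem mul_gen_mem_radical (hx : x ∈ radical S) (l : Fin θ) : x * gen θ l ∈ radical S :=
  mem_radical.2 fun u => by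
    induction u generalizing x with
    | nil => rw [iterDeriv, LinearMap.id_apply, coef_nil_mul, coef_nil_gen, mul_zero]
    | cons k u ih =>
      rw [iterDeriv_cons, wordDeriv_singleton_mul_gen, map_add, map_add, map_smul, map_smul,
        ih (wordDeriv_mem_radical hx k), smul_zero, zero_add]
      split_ifs
      · exact mem_radical.1 hx u
      · simp

theorem gen_mul_mem_radical (hx : x ∈ radical S) (l : Fin θ) : gen θ l * x ∈ radical S :=
  mem_radical.2 fun u => by
    induction u generalizing x with
    | nil => rw [iterDeriv, LinearMap.id_apply, coef_nil_mul, coef_nil_gen, zero_mul]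
    | cons k u ih =>
      rw [iterDeriv_cons, wordDeriv_singleton_mul, map_add, map_add,
        ih (wordDeriv_mem_radical hx k), zero_add, wordDeriv_singleton_gen]
      split_ifs
      · rw [one_mul]
        exact mem_radical.1 (scale_mem_radical _ hx) u
      · simp

theorem mul_mem_radical_left (a : TV θ) (hx : x ∈ radical S) : a * x ∈ radical S := by
  refine mem_of_wordElem_mem (p := (radical S).comap (LinearMap.mulRight ℂ x)) (fun w => ?_) a
  rw [Submodule.mem_comap, LinearMap.mulRight_apply]
  induction w with
  | nil => rwa [wordElem_nil, one_mul]
  | cons l w ih =>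
    rw [← List.singleton_append, wordElem_append, wordElem_singleton, mul_assoc]
    exact gen_mul_mem_radical ih l

theorem mul_mem_radical_right (a : TV θ) (hx : x ∈ radical S) : x * a ∈ radical S :=
  mem_of_mul_gen_mem (p := (radical S).comap (LinearMap.mulLeft ℂ x)) (by simpa using hx)
    (fun b hb l => by simpa [mul_assoc] using mul_gen_mem_radical hb l) a

theorem comul_mem_mixedSub_radical (hx : x ∈ radical S) : S.Δ x ∈ mixedSub (radical S) := by
  refine ker_map_mkQ_le_mixedSub _ (tensor_eq_zero_of_contractions
    (f := fun u => (radical S).liftQ _ (radical_le_ker u)) (fun b hb => ?_) fun u => ?_)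
  · obtain ⟨b, rfl⟩ := (radical S).mkQ_surjective b
    rw [Submodule.mkQ_apply, Submodule.Quotient.mk_eq_zero]
    exact mem_radical.2 fun u => hb u
  · rw [rid_lTensor_liftQ_map_mkQ, ← act_apply, act_coef_nil_comp_iterDeriv, Submodule.mkQ_apply,
      Submodule.Quotient.mk_eq_zero]
    exact iterDeriv_mem_radical hx u

theorem radical_eq_span_homogeneous :
    radical S = Submodule.span ℂ {x | x ∈ radical S ∧ ∃ n, 2 ≤ n ∧ x ∈ homogTot θ n} := by
  refine le_antisymm (fun x hx => ?_) (Submodule.span_le.2 fun x hx => hx.1)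
  obtain ⟨s, hs⟩ := exists_sum_homogPart_eq x
  rw [← hs]
  refine Submodule.sum_mem _ fun n _ => ?_
  rcases lt_or_ge n 2 with hn | hn
  · rw [homogPart_eq_zero_of_mem_radical hx hn]
    exact zero_mem _
  · exact Submodule.subset_span
      ⟨homogPart_mem_radical n hx, n, hn, homogPart_mem_homogTot n x⟩

variable (S) in
theorem radical_le_Jq : radical S ≤ Jq S :=
  le_sSup
    { mul_left a _ hx := mul_mem_radical_left a hx
      mul_right a _ hx := mul_mem_radical_right a hx
      homog_ge2 := radical_eq_span_homogeneous
      coideal _ hx := comul_mem_mixedSub_radical hx }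

end Radical

section Ideals

variable {θ : ℕ} {q : Fin θ → Fin θ → ℂˣ} {S : BraidedStr θ q} {I : Submodule ℂ (TV θ)} {x : TV θ}

namespace IsPreNicholsIdeal

theorem homogPart_eq_zero (hI : IsPreNicholsIdeal S I) {n : ℕ} (hn : n < 2) (hx : x ∈ I) :
    homogPart n x = 0 := by
  have hle : I ≤ LinearMap.ker (homogPart n) := by
    rw [hI.homog_ge2, Submodule.span_le]
    rintro y ⟨-, m, hm, hy⟩
    rw [SetLike.mem_coe, LinearMap.mem_ker, homogPart_of_mem_homogTot n hy, if_neg (by omega)]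
  exact hle hx

theorem homogPart_mem (hI : IsPreNicholsIdeal S I) (n : ℕ) (hx : x ∈ I) : homogPart n x ∈ I := by
  have hle : I ≤ I.comap (homogPart n) := by
    conv_lhs => rw [hI.homog_ge2]
    rw [Submodule.span_le]
    rintro y ⟨hyI, m, -, hy⟩
    rw [SetLike.mem_coe, Submodule.mem_comap, homogPart_of_mem_homogTot n hy]
    split_ifs
    exacts [hyI, zero_mem _]
  exact hle hx

theorem coef_eq_zero (hI : IsPreNicholsIdeal S I) {v : List (Fin θ)} (hv : v.length < 2)
    (hx : x ∈ I) : coef v x = 0 := by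
  have h := coef_homogPart v v.length x
  rwa [hI.homogPart_eq_zero hv hx, map_zero, if_pos rfl, eq_comm] at h

theorem act_mem (hI : IsPreNicholsIdeal S I) {f : TV θ →ₗ[ℂ] ℂ} (hf : ∀ y ∈ I, f y = 0)
    (hx : x ∈ I) : act S f x ∈ I := by
  have hle : mixedSub I ≤ I.comap
      ((TensorProduct.rid ℂ (TV θ)).toLinearMap ∘ₗ LinearMap.lTensor (TV θ) f) := by
    rw [mixedSub, mixedPair, Submodule.span_le]
    rintro _ (⟨a, b, ha, rfl⟩ | ⟨a, b, hb, rfl⟩)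
    · simpa using I.smul_mem (f b) ha
    · simp [hf b hb]
  exact hle (hI.coideal x hx)

theorem actLeft_mem (hI : IsPreNicholsIdeal S I) {f : TV θ →ₗ[ℂ] ℂ} (hf : ∀ y ∈ I, f y = 0)
    (hx : x ∈ I) : actLeft S f x ∈ I := by
  have hle : mixedSub I ≤ I.comap
      ((TensorProduct.lid ℂ (TV θ)).toLinearMap ∘ₗ LinearMap.rTensor (TV θ) f) := by
    rw [mixedSub, mixedPair, Submodule.span_le]
    rintro _ (⟨a, b, ha, rfl⟩ | ⟨a, b, hb, rfl⟩)
    · simp [hf a ha]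
    · simpa using I.smul_mem (f a) hb
  exact hle (hI.coideal x hx)

theorem wordDeriv_mem (hI : IsPreNicholsIdeal S I) (k : Fin θ) (hx : x ∈ I) :
    wordDeriv S [k] x ∈ I :=
  hI.act_mem (fun _ hy => hI.coef_eq_zero (by simp) hy) hx

theorem sigma_mem (hI : IsPreNicholsIdeal S I) (l : Fin θ) (hx : x ∈ I) : sigma q l x ∈ I := by
  have h := wordDeriv_singleton_mul S l (gen θ l) x
  rw [wordDeriv_singleton_gen, if_pos rfl, one_mul] at h
  rw [← sub_eq_iff_eq_add'.2 h]
  exact sub_mem (hI.wordDeriv_mem l (hI.mul_left _ _ hx)) (hI.mul_left _ _ (hI.wordDeriv_mem l hx))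

theorem rho_mem (hI : IsPreNicholsIdeal S I) (l : Fin θ) (hx : x ∈ I) : rho q l x ∈ I := by
  have h := actLeft_mul_gen S (coef [l]) x l
  have hcoef := coef_append_comp_mulRight_gen [] l l
  rw [List.nil_append, if_pos rfl] at hcoef
  rw [hcoef, actLeft_coef_nil, LinearMap.id_apply] at h
  rw [← sub_eq_iff_eq_add.2 h]
  have hl : ∀ y ∈ I, coef [l] y = 0 := fun _ hy => hI.coef_eq_zero (by simp) hy
  exact sub_mem (hI.actLeft_mem hl (hI.mul_right _ _ hx)) (hI.mul_right _ _ (hI.actLeft_mem hl hx))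

end IsPreNicholsIdeal

end Ideals

section Growth

variable {θ θ' : ℕ}

theorem Wfil_mono {m n : ℕ} (h : m ≤ n) : Wfil θ m ≤ Wfil θ n :=
  Submodule.span_mono fun _ ⟨w, hw, hx⟩ => ⟨w, hw.trans h, hx⟩

theorem one_mem_Wfil (n : ℕ) : (1 : TV θ) ∈ Wfil θ n :=
  Submodule.subset_span ⟨[], Nat.zero_le _, rfl⟩

theorem mul_mem_Wfil {a b : ℕ} {x y : TV θ} (hx : x ∈ Wfil θ a) (hy : y ∈ Wfil θ b) :
    x * y ∈ Wfil θ (a + b) := by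
  have h := Submodule.mul_mem_mul hx hy
  rw [Wfil, Wfil, Submodule.span_mul_span] at h
  refine Submodule.span_mono ?_ h
  rintro _ ⟨_, ⟨u, hu, rfl⟩, _, ⟨v, hv, rfl⟩, rfl⟩
  exact ⟨u ++ v, by simp only [List.length_append]; omega, (wordElem_append u v).symm⟩

theorem homogD_le_Wfil (b : Fin θ → ℕ) : homogD θ b ≤ Wfil θ (∑ l, b l) := by
  refine Submodule.span_mono ?_
  rintro _ ⟨w, rfl, rfl⟩
  have hcount := Multiset.sum_count_eq_card (s := Finset.univ) (m := (w : Multiset (Fin θ)))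
    fun l _ => Finset.mem_univ l
  simp only [Multiset.coe_count, Multiset.coe_card] at hcount
  exact ⟨w, hcount.ge, rfl⟩

instance finiteDimensional_Wfil (n : ℕ) : FiniteDimensional ℂ (Wfil θ n) := by
  refine FiniteDimensional.span_of_finite ℂ ?_
  refine ((List.finite_length_le (Fin θ) n).image (wordElem θ)).subset ?_
  rintro _ ⟨w, hw, rfl⟩
  exact ⟨w, hw, rfl⟩

theorem lift_wordElem_mem_Wfil {Y : Fin θ' → TV θ} {e : ℕ} (hY : ∀ v, Y v ∈ Wfil θ e)
    (w : List (Fin θ')) : FreeAlgebra.lift ℂ Y (wordElem θ' w) ∈ Wfil θ (e * w.length) := by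
  induction w using List.reverseRecOn with
  | nil => simpa only [wordElem_nil, map_one] using one_mem_Wfil _
  | append_singleton w l ih =>
    rw [wordElem_append, map_mul, wordElem_singleton, gen, FreeAlgebra.lift_ι_apply,
      List.length_append, mul_add, List.length_singleton, mul_one]
    exact mul_mem_Wfil ih (hY l)

theorem map_lift_Wfil_le {Y : Fin θ' → TV θ} {e : ℕ} (hY : ∀ v, Y v ∈ Wfil θ e) (n : ℕ) :
    (Wfil θ' n).map (FreeAlgebra.lift ℂ Y).toLinearMap ≤ Wfil θ (e * n) := by
  rw [Submodule.map_le_iff_le_comap, Wfil, Submodule.span_le]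
  rintro _ ⟨w, hwn, rfl⟩
  exact Wfil_mono (Nat.mul_le_mul_left e hwn) (lift_wordElem_mem_Wfil hY w)

theorem finrank_map_mkQ_le_of_le {M : Type*} [AddCommGroup M] [Module ℂ M] {K J : Submodule ℂ M}
    (h : K ≤ J) (W : Submodule ℂ M) [FiniteDimensional ℂ W] :
    Module.finrank ℂ (W.map J.mkQ) ≤ Module.finrank ℂ (W.map K.mkQ) := by
  rw [← Submodule.factor_comp_mk h, Submodule.map_comp]
  exact Submodule.finrank_map_le _ _

theorem finrank_map_mkQ_comap {M N : Type*} [AddCommGroup M] [Module ℂ M] [AddCommGroup N]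
    [Module ℂ N] (φ : M →ₗ[ℂ] N) (I : Submodule ℂ N) (W : Submodule ℂ M) :
    Module.finrank ℂ (W.map (I.comap φ).mkQ) = Module.finrank ℂ ((W.map φ).map I.mkQ) := by
  have hinj : Function.Injective ((I.comap φ).mapQ I φ le_rfl) := by
    rw [← LinearMap.ker_eq_bot, Submodule.ker_mapQ, Submodule.mkQ_map_self]
  rw [(Submodule.equivMapOfInjective _ hinj _).finrank_eq, ← Submodule.map_comp,
    Submodule.mapQ_mkQ, Submodule.map_comp]

theorem FinGK.of_comap_le {I : Submodule ℂ (TV θ)} (hGK : FinGK I) {Y : Fin θ' → TV θ} {e : ℕ}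
    (hY : ∀ v, Y v ∈ Wfil θ e) {J : Submodule ℂ (TV θ')}
    (hJ : I.comap (FreeAlgebra.lift ℂ Y).toLinearMap ≤ J) : FinGK J := by
  obtain ⟨C, d, h⟩ := hGK
  refine ⟨C * (e + 1) ^ d, d, fun n => ?_⟩
  calc Module.finrank ℂ ((Wfil θ' n).map J.mkQ)
      ≤ Module.finrank ℂ (((Wfil θ' n).map (FreeAlgebra.lift ℂ Y).toLinearMap).map I.mkQ) :=
        (finrank_map_mkQ_le_of_le hJ _).trans_eq (finrank_map_mkQ_comap _ _ _)
    _ ≤ Module.finrank ℂ ((Wfil θ (e * n)).map I.mkQ) :=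
        Submodule.finrank_mono (Submodule.map_mono (map_lift_Wfil_le hY n))
    _ ≤ C * (e * n + 1) ^ d := h (e * n)
    _ ≤ C * ((e + 1) * (n + 1)) ^ d :=
        Nat.mul_le_mul_left C (Nat.pow_le_pow_left (by nlinarith) d)
    _ = C * (e + 1) ^ d * (n + 1) ^ d := by rw [mul_pow, mul_assoc]

end Growth

section SkewDerivations

variable {θ : ℕ} {q : Fin θ → Fin θ → ℂˣ} {S : BraidedStr θ q} {I : Submodule ℂ (TV θ)}

/-- The operator `P` restricts to a skew derivation of degree `a` on the subalgebra `G` of `T(V)`,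
in the sense that `P (w y) = w P(y) + q(a, deg y) P(w) y`. -/
def IsSkewDerivationOn (q : Fin θ → Fin θ → ℂˣ) (a : Fin θ → ℕ) (G : Subalgebra ℂ (TV θ))
    (P : Module.End ℂ (TV θ)) : Prop :=
  ∀ ⦃w y : TV θ⦄ ⦃b : Fin θ → ℕ⦄, w ∈ G → y ∈ G → y ∈ homogD θ b →
    P (w * y) = w * P y + (bichar q a b : ℂ) • (P w * y)

variable {a : Fin θ → ℕ} {G : Subalgebra ℂ (TV θ)} {P : Module.End ℂ (TV θ)}

theorem one_mem_homogD : (1 : TV θ) ∈ homogD θ 0 :=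
  Submodule.subset_span ⟨[], degW_nil, rfl⟩

theorem IsSkewDerivationOn.map_one (hP : IsSkewDerivationOn q a G P) : P 1 = 0 := by
  simpa [bichar_zero_right] using hP G.one_mem G.one_mem one_mem_homogD

theorem isSkewDerivationOn_wordDeriv (k : Fin θ) :
    IsSkewDerivationOn q (δ θ k) G (wordDeriv S [k]) := fun w y b _ _ hyb => by
  rw [wordDeriv_singleton_mul, sigma_of_mem_homogD k hyb, mul_smul_comm]

theorem IsSkewDerivationOn.wordDeriv_pow_comp (hP : IsSkewDerivationOn q a G P) {m : Fin θ}
    (hm : ∀ w ∈ G, wordDeriv S [m] w = 0) (n : ℕ) :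
    IsSkewDerivationOn q (n • δ θ m + a) G (wordDeriv S [m] ^ n * P) := by
  induction n with
  | zero => simpa using hP
  | succ n ih =>
    intro w y b hw hy hyb
    rw [pow_succ', mul_assoc, Module.End.mul_apply, ih hw hy hyb, map_add, map_smul,
      wordDeriv_singleton_mul, hm w hw, zero_mul, add_zero, wordDeriv_singleton_mul, hm y hy,
      mul_zero, zero_add, sigma_of_mem_homogD m hyb, mul_smul_comm, smul_smul, succ_nsmul',
      add_assoc, bichar_add_left q (δ θ m), Units.val_mul, mul_comm (bichar q (δ θ m) b : ℂ)]
    rfl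

section Transfer

variable {n : ℕ} {d : Fin n → Fin θ → ℕ} {Y : Fin n → TV θ} {P : Fin n → Module.End ℂ (TV θ)}
  {κ : Fin n → ℂ}

theorem lift_mem_subalgebra (hYG : ∀ v, Y v ∈ G) (x : TV n) : FreeAlgebra.lift ℂ Y x ∈ G :=
  mem_of_mul_gen_mem (p := (Subalgebra.toSubmodule G).comap (FreeAlgebra.lift ℂ Y).toLinearMap)
    (by simp) (fun b hb l => by simpa [gen] using G.mul_mem hb (hYG l)) x

theorem coef_nil_lift (hd : ∀ v, d v ≠ 0) (hYd : ∀ v, Y v ∈ homogD θ (d v)) (x : TV n) :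
    coef [] (FreeAlgebra.lift ℂ Y x) = coef [] x := by
  have h : coef [] ∘ₗ (FreeAlgebra.lift ℂ Y).toLinearMap = coef [] :=
    ext_mul_gen (by simp [coef_one]) fun b l _ => by
      rw [LinearMap.comp_apply, AlgHom.toLinearMap_apply, map_mul, coef_nil_mul, coef_nil_mul,
        coef_nil_gen, gen, FreeAlgebra.lift_ι_apply, coef_nil_of_mem_homogD (hd l) (hYd l),
        mul_zero, mul_zero]
  exact LinearMap.congr_fun h x

theorem apply_lift_eq_smul_lift_wordDeriv (S' : BraidedStr n (restrict q d))
    (hYd : ∀ v, Y v ∈ homogD θ (d v)) (hYG : ∀ v, Y v ∈ G)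
    (hP : ∀ u, IsSkewDerivationOn q (d u) G (P u))
    (hPY : ∀ u v, P u (Y v) = if u = v then κ u • 1 else 0) (u : Fin n) (x : TV n) :
    P u (FreeAlgebra.lift ℂ Y x) = κ u • FreeAlgebra.lift ℂ Y (wordDeriv S' [u] x) := by
  have h : P u ∘ₗ (FreeAlgebra.lift ℂ Y).toLinearMap =
      κ u • (FreeAlgebra.lift ℂ Y).toLinearMap ∘ₗ wordDeriv S' [u] := by
    refine ext_mul_gen (by simp [(hP u).map_one, wordDeriv_one]) fun b l h => ?_
    simp only [LinearMap.comp_apply, AlgHom.toLinearMap_apply, LinearMap.smul_apply] at h ⊢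
    rw [map_mul, gen, FreeAlgebra.lift_ι_apply,
      hP u (lift_mem_subalgebra hYG b) (hYG l) (hYd l), h, hPY, ← gen,
      wordDeriv_singleton_mul_gen, map_add, map_smul, map_mul, gen, FreeAlgebra.lift_ι_apply,
      add_comm, smul_add, smul_mul_assoc, smul_comm]
    split_ifs <;> simp [restrict]
  exact LinearMap.congr_fun h x

/-- The operators `P u` make the algebra generated by the images of the `Y v` in `T(V)/I` surject
onto the Nichols algebra of `restrict q d`. -/
theorem finiteRootSystem_restrict (hAAH : AAH) (hI : IsPreNicholsIdeal S I) (hGK : FinGK I)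
    (hd : ∀ v, d v ≠ 0) (hYd : ∀ v, Y v ∈ homogD θ (d v)) (hYG : ∀ v, Y v ∈ G)
    (hP : ∀ u, IsSkewDerivationOn q (d u) G (P u)) (hPI : ∀ u, ∀ x ∈ I, P u x ∈ I)
    (hκ : ∀ u, κ u ≠ 0) (hPY : ∀ u v, P u (Y v) = if u = v then κ u • 1 else 0) :
    FiniteRootSystem (restrict q d) := by
  let S' := braidedStr (restrict q d)
  have hY (v : Fin n) : Y v ∈ Wfil θ (∑ u, ∑ l, d u l) :=
    Wfil_mono (Finset.single_le_sum (f := fun u => ∑ l, d u l) (fun _ _ => Nat.zero_le _)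
      (Finset.mem_univ v)) (homogD_le_Wfil _ (hYd v))
  suffices h : I.comap (FreeAlgebra.lift ℂ Y).toLinearMap ≤ radical S' from
    hAAH n _ S' (hGK.of_comap_le hY (h.trans (radical_le_Jq S')))
  refine fun x hx => mem_radical.2 fun u => ?_
  replace hx : FreeAlgebra.lift ℂ Y x ∈ I := hx
  induction u generalizing x with
  | nil =>
    rw [iterDeriv, LinearMap.id_apply, ← coef_nil_lift hd hYd]
    exact hI.coef_eq_zero (by simp) hx
  | cons k u ih =>
    rw [iterDeriv_cons]
    refine ih _ ?_
    rw [← Submodule.smul_mem_iff I (hκ k), ← apply_lift_eq_smul_lift_wordDeriv S' hYd hYG hP hPY]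
    exact hPI k _ hx

end Transfer

end SkewDerivations

section QuadraticFunctionals

variable {θ : ℕ} {q : Fin θ → Fin θ → ℂˣ} {S : BraidedStr θ q} {I : Submodule ℂ (TV θ)}
  {i j : Fin θ}

/-- The functional of degree two on `T(V)` taking the value `h m n` at `x_m x_n`. -/
def eta (h : Fin θ → Fin θ → ℂ) : TV θ →ₗ[ℂ] ℂ := ∑ m, ∑ n, h m n • coef [m, n]

theorem eta_eq_comp_homogPart (g : TV θ →ₗ[ℂ] ℂ) :
    eta (fun m n => g (gen θ m * gen θ n)) = g ∘ₗ homogPart 2 := ext_wordElem fun w => by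
  simp only [eta, LinearMap.sum_apply, LinearMap.smul_apply, coef_wordElem, LinearMap.comp_apply,
    homogPart_wordElem]
  split_ifs with hw
  · obtain ⟨a, b, rfl⟩ := List.length_eq_two.1 hw
    simp [ite_and, wordElem, Finset.sum_ite_eq]
  · rw [map_zero]
    refine Finset.sum_eq_zero fun m _ => Finset.sum_eq_zero fun n _ => ?_
    rw [if_neg (by rintro rfl; exact hw rfl), smul_zero]

theorem wordDeriv_singleton_xw_pair (hij : i ≠ j) (hc : qtil q i j = 1) (k : Fin θ) :
    wordDeriv S [k] (xw q [i, j]) = 0 := by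
  rw [xw_pair, map_sub, map_smul, wordDeriv_singleton_mul_gen, wordDeriv_singleton_mul_gen,
    wordDeriv_singleton_gen, wordDeriv_singleton_gen]
  by_cases hi : k = i
  · subst hi
    simp [hij]
  · by_cases hj : k = j
    · subst hj
      rw [qtil] at hc
      simp [hi, smul_smul, hc]
    · simp [hi, hj]

theorem sigma_xw_pair (k : Fin θ) :
    sigma q k (xw q [i, j]) = ((q k i : ℂ) * q k j) • xw q [i, j] := by
  rw [sigma_of_mem_homogD k (xw_pair_mem_homogD i j), bichar_add_right, bichar_δ, bichar_δ,
    Units.val_mul]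

theorem rho_xw_pair (k : Fin θ) :
    rho q k (xw q [i, j]) = ((q i k : ℂ) * q j k) • xw q [i, j] := by
  simp only [xw_pair, map_sub, map_mul, map_smul, rho_gen, smul_mul_smul_comm]
  module

theorem eq_one_of_sub_mem_of_smul_sub_mem {K M : Type*} [Field K] [AddCommGroup M] [Module K M]
    {N : Submodule K M} {x y : M} {a : K} (hx : x ∉ N) (h : x - y ∈ N) (ha : a • x - y ∈ N) :
    a = 1 := by
  by_contra hne
  have hsub : (a - 1) • x ∈ N := by
    rw [sub_smul, one_smul]
    simpa using sub_mem ha h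
  exact hx ((N.smul_mem_iff (sub_ne_zero.2 hne)).1 hsub)

theorem xw_pair_notMem_sup_span_sq (hI : IsPreNicholsIdeal S I) (hij : i ≠ j)
    (hc : qtil q i j = 1) (hx : xw q [i, j] ∉ I) {k : Fin θ}
    (hk : qtil q i k * qtil q j k ≠ 1) :
    xw q [i, j] ∉ I ⊔ Submodule.span ℂ {gen θ k * gen θ k} := by
  intro hmem
  obtain ⟨z, hz, y, hy, hzy⟩ := Submodule.mem_sup.1 hmem
  obtain ⟨c, rfl⟩ := Submodule.mem_span_singleton.1 hy
  rw [← eq_sub_iff_add_eq] at hzy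
  subst hzy
  have hderiv := hI.coef_eq_zero (v := [k]) (by simp) (hI.wordDeriv_mem k hz)
  have hcq : c * (1 + q k k) = 0 := by
    rw [map_sub, wordDeriv_singleton_xw_pair hij hc, map_smul, wordDeriv_singleton_mul_gen,
      wordDeriv_singleton_gen, ← wordElem_singleton] at hderiv
    simp only [↓reduceIte, one_mul, smul_add, zero_sub, neg_add_rev, map_add, map_neg, map_smul,
      coef_wordElem, smul_eq_mul, mul_one] at hderiv
    linear_combination -hderiv
  rcases mul_eq_zero.1 hcq with rfl | hkk
  · exact hx (by simpa using hz)
  have hsq : (q k k : ℂ) * q k k = 1 := by linear_combination ((q k k : ℂ) - 1) * hkk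
  have hrho : (q i k : ℂ) * q j k = 1 := eq_one_of_sub_mem_of_smul_sub_mem hx hz <| by
    simpa only [map_sub, rho_xw_pair, map_smul, map_mul, rho_gen, smul_mul_smul_comm, hsq,
      one_smul] using hI.rho_mem k hz
  have hsigma : (q k i : ℂ) * q k j = 1 := eq_one_of_sub_mem_of_smul_sub_mem hx hz <| by
    simpa only [map_sub, sigma_xw_pair, map_smul, map_mul, sigma_gen, smul_mul_smul_comm, hsq,
      one_smul] using hI.sigma_mem k hz
  refine hk ?_
  simp only [qtil]
  linear_combination (q k i : ℂ) * q k j * hrho + hsigma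

theorem exists_eta (hI : IsPreNicholsIdeal S I) (hij : i ≠ j) (hc : qtil q i j = 1)
    (hx : xw q [i, j] ∉ I) {k : Fin θ} (hk : qtil q i k * qtil q j k ≠ 1) :
    ∃ h : Fin θ → Fin θ → ℂ, h k k = 0 ∧ h i j - q i j * h j i = 1 ∧ ∀ x ∈ I, eta h x = 0 := by
  obtain ⟨g, hgx, hg⟩ :=
    Submodule.exists_le_ker_of_notMem (xw_pair_notMem_sup_span_sq hI hij hc hx hk)
  obtain ⟨hgI, hgk⟩ := sup_le_iff.1 hg
  let g' := (g (xw q [i, j]))⁻¹ • g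
  refine ⟨fun m n => g' (gen θ m * gen θ n), ?_, ?_, fun x hx => ?_⟩
  · have hg0 : g (gen θ k * gen θ k) = 0 := hgk (Submodule.mem_span_singleton_self _)
    simp [g', hg0]
  · have hg1 : g' (xw q [i, j]) = 1 := by simp [g', hgx]
    rwa [xw_pair, map_sub, map_smul, smul_eq_mul] at hg1
  · have hg0 : g (homogPart 2 x) = 0 := hgI (hI.homogPart_mem 2 hx)
    rw [eta_eq_comp_homogPart]
    simp [g', hg0]

end QuadraticFunctionals

section PairSubalgebra

variable {θ : ℕ} {q : Fin θ → Fin θ → ℂˣ} {S : BraidedStr θ q} {i j : Fin θ} {X : Set (Fin θ)}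
  {h : Fin θ → Fin θ → ℂ} {b : Fin θ → ℕ} {z : TV θ}

variable (S) in
theorem act_eta (h : Fin θ → Fin θ → ℂ) (x : TV θ) :
    act S (eta h) x = ∑ m, ∑ n, h m n • wordDeriv S [m, n] x := by
  simp only [eta, map_sum, map_smul, LinearMap.sum_apply, LinearMap.smul_apply, wordDeriv]

theorem act_eta_mul {w y : TV θ} (hy : y ∈ homogD θ b)
    (hmid : ∀ m n, h m n = 0 ∨ wordDeriv S [m] w = 0 ∨ wordDeriv S [n] y = 0)
    (hw : ∀ m n, ¬(m = i ∧ n = j) → ¬(m = j ∧ n = i) → h m n = 0 ∨ wordDeriv S [m, n] w = 0) :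
    act S (eta h) (w * y) = w * act S (eta h) y +
      (bichar q (δ θ i + δ θ j) b : ℂ) • (act S (eta h) w * y) := by
  simp only [act_eta, Finset.mul_sum, Finset.sum_mul, Finset.smul_sum, ← Finset.sum_add_distrib]
  refine Finset.sum_congr rfl fun m _ => Finset.sum_congr rfl fun n _ => ?_
  have hcross : h m n • (wordDeriv S [m] w * sigma q m (wordDeriv S [n] y)) = 0 := by
    rcases hmid m n with e | e | e <;> simp [e]
  rw [wordDeriv_pair_mul, smul_add, smul_add, hcross, add_zero, sigma_of_mem_homogD n hy,
    map_smul, sigma_of_mem_homogD m hy, mul_smul_comm, bichar_add_left, Units.val_mul]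
  refine congr_arg₂ (· + ·) (mul_smul_comm _ _ _).symm ?_
  by_cases hmn : m = i ∧ n = j
  · rw [hmn.1, hmn.2]
    simp only [mul_smul_comm, smul_mul_assoc]
    module
  by_cases hnm : m = j ∧ n = i
  · rw [hnm.1, hnm.2]
    simp only [mul_smul_comm, smul_mul_assoc]
    module
  rcases hw m n hmn hnm with e | e <;> simp [e]

variable (S i j X) in
/-- The elements of `T(V)` killed by the `∂_m` with `m ∉ X` and by the second order operators not
indexed by two letters of `X` or by the pair `{i, j}`. On these elements a functional of degree two
vanishing on `X × X` acts as a skew derivation of degree `α_i + α_j`. -/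
def pairSubalgebra : Subalgebra ℂ (TV θ) where
  carrier := {a | (∀ m ∉ X, wordDeriv S [m] a = 0) ∧ ∀ m n, (m ∉ X ∨ n ∉ X) →
    ¬(m = i ∧ n = j) → ¬(m = j ∧ n = i) → wordDeriv S [m, n] a = 0}
  add_mem' ha hb := ⟨fun m hm => by rw [map_add, ha.1 m hm, hb.1 m hm, add_zero],
    fun m n h1 h2 h3 => by rw [map_add, ha.2 m n h1 h2 h3, hb.2 m n h1 h2 h3, add_zero]⟩
  mul_mem' {w y} hw hy := by
    refine ⟨fun m hm => by simp [wordDeriv_singleton_mul, hw.1 m hm, hy.1 m hm],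
      fun m n h1 h2 h3 => ?_⟩
    rw [wordDeriv_pair_mul, hw.2 m n h1 h2 h3, hy.2 m n h1 h2 h3]
    rcases h1 with h1 | h1
    · simp [hw.1 m h1]
    · simp [hy.1 n h1]
  algebraMap_mem' c := by
    simp [Algebra.algebraMap_eq_smul_one, wordDeriv_one]

theorem gen_mem_pairSubalgebra {k : Fin θ} (hk : k ∈ X) : gen θ k ∈ pairSubalgebra S i j X :=
  ⟨fun m hm => by rw [wordDeriv_singleton_gen, if_neg (ne_of_mem_of_not_mem hk hm).symm],
    fun m n _ _ _ => wordDeriv_pair_gen S m n k⟩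

theorem pairSubalgebra_empty_le : pairSubalgebra S i j ∅ ≤ pairSubalgebra S i j X :=
  fun _ ha => ⟨fun m _ => ha.1 m (Set.notMem_empty m),
    fun m n _ => ha.2 m n (Or.inl (Set.notMem_empty m))⟩

theorem isSkewDerivationOn_act_eta (hX : X.Subsingleton) (hh : ∀ m ∈ X, h m m = 0) :
    IsSkewDerivationOn q (δ θ i + δ θ j) (pairSubalgebra S i j X) (act S (eta h)) := by
  intro w y b hw hy hyb
  have hXX : ∀ m n, (m ∉ X ∨ n ∉ X) ∨ h m n = 0 := fun m n => by
    by_cases hmn : m ∈ X ∧ n ∈ X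
    · exact Or.inr (hX hmn.1 hmn.2 ▸ hh m hmn.1)
    · exact Or.inl (not_and_or.1 hmn)
  refine act_eta_mul hyb (fun m n => ?_) fun m n h1 h2 => ?_
  · rcases hXX m n with (hm | hn) | h0
    exacts [Or.inr (Or.inl (hw.1 m hm)), Or.inr (Or.inr (hy.1 n hn)), Or.inl h0]
  · exact (hXX m n).elim (fun hmn => Or.inr (hw.2 m n hmn h1 h2)) Or.inl

theorem ad1_mem_pairSubalgebra (hz : z ∈ pairSubalgebra S i j ∅) (hzb : z ∈ homogD θ b)
    (l : Fin θ) : ad1 q l b z ∈ pairSubalgebra S i j ∅ := by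
  have hderiv (m : Fin θ) : wordDeriv S [m] z = 0 := hz.1 m (Set.notMem_empty m)
  refine ⟨fun m _ => ?_, fun m n h0 h1 h2 => ?_⟩
  · rw [ad1, brk, map_sub, map_smul, wordDeriv_singleton_mul, wordDeriv_singleton_mul_gen, hderiv,
      wordDeriv_singleton_gen, ← coe_bichar]
    split_ifs with hml
    · subst hml; simp [sigma_of_mem_homogD m hzb]
    · simp
  · rw [ad1, brk, map_sub, map_smul, wordDeriv_pair_mul, wordDeriv_pair_mul_gen, hderiv, hderiv,
      wordDeriv_pair_gen, hz.2 m n h0 h1 h2]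
    simp

theorem xw_pair_mem_pairSubalgebra (hij : i ≠ j) (hc : qtil q i j = 1) :
    xw q [i, j] ∈ pairSubalgebra S i j ∅ := by
  refine ⟨fun m _ => wordDeriv_singleton_xw_pair hij hc m, fun m n _ h1 h2 => ?_⟩
  rw [xw_pair, map_sub, map_smul, wordDeriv_pair_mul_gen, wordDeriv_pair_mul_gen,
    wordDeriv_pair_gen, wordDeriv_pair_gen, wordDeriv_singleton_gen, wordDeriv_singleton_gen,
    ← ite_and, ← ite_and, if_neg (mt And.symm h1), if_neg (mt And.symm h2)]
  simp

theorem act_eta_gen (h : Fin θ → Fin θ → ℂ) (l : Fin θ) : act S (eta h) (gen θ l) = 0 := by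
  simp [act_eta, wordDeriv_pair_gen]

theorem act_eta_ad1 (hz : z ∈ pairSubalgebra S i j ∅) (hzb : z ∈ homogD θ b)
    (h : Fin θ → Fin θ → ℂ) (l : Fin θ) :
    act S (eta h) (ad1 q l b z) = gen θ l * act S (eta h) z -
      ((bichar q (δ θ l) b * bichar q (δ θ i + δ θ j) (δ θ l) : ℂˣ) : ℂ) •
        (act S (eta h) z * gen θ l) := by
  have hderiv (m : Fin θ) : wordDeriv S [m] z = 0 := hz.1 m (Set.notMem_empty m)
  have hleft := act_eta_mul (i := i) (j := j) (h := h) hzb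
    (fun m n => Or.inr (Or.inr (hderiv n))) (fun m n _ _ => Or.inr (wordDeriv_pair_gen S m n l))
  have hright := act_eta_mul (h := h) (gen_mem_homogD l)
    (fun m n => Or.inr (Or.inl (hderiv m)))
    (fun m n h1 h2 => Or.inr (hz.2 m n (Or.inl (Set.notMem_empty m)) h1 h2))
  rw [ad1, brk, map_sub, map_smul, hleft, hright, act_eta_gen, ← coe_bichar]
  simp [smul_smul]

theorem act_eta_xw_pair (hh : h i j - q i j * h j i = 1) :
    act S (eta h) (xw q [i, j]) = 1 := by
  have hgen (a b : Fin θ) : act S (eta h) (gen θ a * gen θ b) = h a b • 1 := by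
    simp [act_eta, wordDeriv_pair_mul_gen, wordDeriv_pair_gen, wordDeriv_singleton_gen]
  rw [xw_pair, map_sub, map_smul, hgen, hgen, smul_smul, ← sub_smul, hh, one_smul]

end PairSubalgebra

section PairElements

variable {θ : ℕ} {q : Fin θ → Fin θ → ℂˣ} {S : BraidedStr θ q} {i j : Fin θ} {d : Fin θ → ℕ}
  {z : TV θ}

variable (q) in
/-- The iterated braided adjoint `(ad_c x_l)^n z`, for `z` of degree `d`. -/
def adIter (l : Fin θ) (d : Fin θ → ℕ) (z : TV θ) : ℕ → TV θ
  | 0 => z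
  | n + 1 => ad1 q l (n • δ θ l + d) (adIter l d z n)

theorem adIter_mem_homogD (hzd : z ∈ homogD θ d) (l : Fin θ) (n : ℕ) :
    adIter q l d z n ∈ homogD θ (n • δ θ l + d) := by
  induction n with
  | zero => simpa [adIter] using hzd
  | succ n ih =>
    rw [succ_nsmul', add_assoc]
    exact ad1_mem_homogD l ih

theorem adIter_mem_pairSubalgebra (hz : z ∈ pairSubalgebra S i j ∅) (hzd : z ∈ homogD θ d)
    (l : Fin θ) (n : ℕ) : adIter q l d z n ∈ pairSubalgebra S i j ∅ := by
  induction n with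
  | zero => exact hz
  | succ n ih => exact ad1_mem_pairSubalgebra ih (adIter_mem_homogD hzd l n) l

/-- The degree of the element `(ad_c x_i)^a (ad_c x_j)^b x_{ij}`. -/
def pairDeg (i j : Fin θ) (a b : ℕ) : Fin θ → ℕ := a • δ θ i + (b • δ θ j + (δ θ i + δ θ j))

variable (q) in
/-- The element `(ad_c x_i)^a (ad_c x_j)^b x_{ij}` of `T(V)`. -/
def pairElem (i j : Fin θ) (a b : ℕ) : TV θ :=
  adIter q i (b • δ θ j + (δ θ i + δ θ j)) (adIter q j (δ θ i + δ θ j) (xw q [i, j]) b) a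

theorem pairDeg_ne_zero (i j : Fin θ) (a b : ℕ) : pairDeg i j a b ≠ 0 := fun h => by
  simpa [pairDeg, δ] using congrFun h i

theorem pairElem_mem_homogD (i j : Fin θ) (a b : ℕ) :
    pairElem q i j a b ∈ homogD θ (pairDeg i j a b) :=
  adIter_mem_homogD (adIter_mem_homogD (xw_pair_mem_homogD i j) j b) i a

theorem pairElem_mem_pairSubalgebra (hij : i ≠ j) (hc : qtil q i j = 1) (a b : ℕ) :
    pairElem q i j a b ∈ pairSubalgebra S i j ∅ :=
  adIter_mem_pairSubalgebra
    (adIter_mem_pairSubalgebra (xw_pair_mem_pairSubalgebra hij hc) (xw_pair_mem_homogD i j) j b)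
    (adIter_mem_homogD (xw_pair_mem_homogD i j) j b) i a

end PairElements

section QuantumScalars

/-- The scalar `∏_{t < n} (1 - r^{t+2})` picked up by `(ad_c x_l)^n` under a skew derivation. -/
def defect (r : ℂ) (n : ℕ) : ℂ := ∏ t ∈ Finset.range n, (1 - r ^ (t + 2))

/-- The quantum rising factorial `(s+1)_r (s+2)_r ⋯ (s+n)_r`. -/
def qascFac (r : ℂ) (s n : ℕ) : ℂ := ∏ t ∈ Finset.range n, qnum r (s + t + 1)

theorem defect_ne_zero {r : ℂ} {n : ℕ} (h : ∀ t < n, r ^ (t + 2) ≠ 1) : defect r n ≠ 0 :=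
  Finset.prod_ne_zero_iff.2 fun t ht => sub_ne_zero.2 (h t (Finset.mem_range.1 ht)).symm

theorem pow_eq_one_of_qnum_eq_zero {r : ℂ} {m : ℕ} (h : qnum r m = 0) : r ^ m = 1 := by
  rw [← sub_eq_zero, ← geom_sum_mul, ← qnum, h, zero_mul]

theorem qascFac_zero_ne_zero {r : ℂ} {n : ℕ} (h : ∀ t < n, r ^ (t + 2) ≠ 1) :
    qascFac r 0 n ≠ 0 := by
  refine Finset.prod_ne_zero_iff.2 fun t ht h0 => ?_
  rcases t with - | t
  · simp [qnum] at h0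
  · refine h t (Nat.lt_of_succ_lt (Finset.mem_range.1 ht)) ?_
    simpa [add_assoc] using pow_eq_one_of_qnum_eq_zero h0

theorem eq_defect_smul_pow {A : Type*} [Ring A] [Algebra ℂ A] {x : A} {f : ℕ → A} {μ r : ℂ}
    (h0 : f 0 = μ • 1) (hf : ∀ n, f (n + 1) = x * f n - r ^ (n + 2) • (f n * x)) (n : ℕ) :
    f n = (μ * defect r n) • x ^ n := by
  induction n with
  | zero => simp [h0, defect]
  | succ n ih =>
    have hdefect : defect r (n + 1) = defect r n * (1 - r ^ (n + 2)) := Finset.prod_range_succ _ _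
    rw [hf, ih, mul_smul_comm, smul_mul_assoc, ← pow_succ, ← pow_succ', hdefect]
    module

end QuantumScalars

section Derivatives

variable {θ : ℕ} {q : Fin θ → Fin θ → ℂˣ} (S : BraidedStr θ q) {k l : Fin θ}

theorem wordDeriv_gen_pow (k : Fin θ) (n : ℕ) :
    wordDeriv S [k] (gen θ k ^ (n + 1)) = qnum (q k k) (n + 1) • gen θ k ^ n := by
  induction n with
  | zero => simp [wordDeriv_singleton_gen, qnum]
  | succ n ih =>
    have hq : qnum (q k k) (n + 2) = q k k * qnum (q k k) (n + 1) + 1 := geom_sum_succ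
    rw [pow_succ, wordDeriv_singleton_mul_gen, ih, if_pos rfl, smul_mul_assoc, ← pow_succ, hq]
    module

theorem wordDeriv_pow_gen_pow (k : Fin θ) (s n : ℕ) :
    (wordDeriv S [k] ^ n) (gen θ k ^ (s + n)) = qascFac (q k k) s n • gen θ k ^ s := by
  induction n with
  | zero => simp [qascFac]
  | succ n ih =>
    rw [pow_succ, Module.End.mul_apply, ← add_assoc, wordDeriv_gen_pow, map_smul, ih, smul_smul,
      mul_comm, qascFac, qascFac, Finset.prod_range_succ]

theorem wordDeriv_gen_pow_of_ne (hkl : k ≠ l) (n : ℕ) : wordDeriv S [k] (gen θ l ^ n) = 0 := by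
  induction n with
  | zero => exact wordDeriv_one S (by simp)
  | succ n ih => simp [pow_succ, wordDeriv_singleton_mul_gen, ih, hkl]

theorem wordDeriv_pow_gen_mul (hkl : k ≠ l) (n : ℕ) (f : TV θ) :
    (wordDeriv S [k] ^ n) (gen θ l * f) = gen θ l * (wordDeriv S [k] ^ n) f := by
  induction n with
  | zero => rfl
  | succ n ih =>
    rw [pow_succ', Module.End.mul_apply, ih, wordDeriv_singleton_mul, wordDeriv_singleton_gen,
      if_neg hkl, zero_mul, add_zero, Module.End.mul_apply]

theorem wordDeriv_pow_mul_gen (hkl : k ≠ l) (n : ℕ) (f : TV θ) :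
    (wordDeriv S [k] ^ n) (f * gen θ l) =
      (q k l : ℂ) ^ n • ((wordDeriv S [k] ^ n) f * gen θ l) := by
  induction n with
  | zero => simp
  | succ n ih =>
    rw [pow_succ', Module.End.mul_apply, ih, map_smul, wordDeriv_singleton_mul_gen, if_neg hkl,
      add_zero, smul_smul, Module.End.mul_apply, pow_succ]

end Derivatives

section PairOperators

variable {θ : ℕ} {q : Fin θ → Fin θ → ℂˣ} {S : BraidedStr θ q} {I : Submodule ℂ (TV θ)}
  {i j : Fin θ} {X : Set (Fin θ)} {h : Fin θ → Fin θ → ℂ} {a b : ℕ}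

variable (S) in
/-- The operator `∂_i^a ∂_j^b (id ⊗ η) Δ` on `T(V)`, where `η` is the functional of degree two given
by `h`. It is dual to `pairElem q i j a b`. -/
def pairOp (i j : Fin θ) (h : Fin θ → Fin θ → ℂ) (a b : ℕ) : Module.End ℂ (TV θ) :=
  wordDeriv S [i] ^ a * (wordDeriv S [j] ^ b * act S (eta h))

theorem isSkewDerivationOn_pairOp (hX : X.Subsingleton) (hh : ∀ m ∈ X, h m m = 0) (hj : j ∉ X)
    (hi : a = 0 ∨ i ∉ X) :
    IsSkewDerivationOn q (pairDeg i j a b) (pairSubalgebra S i j X) (pairOp S i j h a b) := by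
  have hjb := (isSkewDerivationOn_act_eta (S := S) (i := i) (j := j) hX hh).wordDeriv_pow_comp
    (fun w hw => hw.1 j hj) b
  rcases hi with rfl | hi
  · simpa [pairDeg, pairOp] using hjb
  · exact hjb.wordDeriv_pow_comp (fun w hw => hw.1 i hi) a

theorem IsPreNicholsIdeal.wordDeriv_pow_mem (hI : IsPreNicholsIdeal S I) (k : Fin θ) (n : ℕ)
    {x : TV θ} (hx : x ∈ I) : (wordDeriv S [k] ^ n) x ∈ I := by
  rw [Module.End.pow_apply]
  exact Set.MapsTo.iterate (s := (I : Set (TV θ))) (fun y hy => hI.wordDeriv_mem k hy) n hx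

theorem IsPreNicholsIdeal.pairOp_mem (hI : IsPreNicholsIdeal S I) (hη : ∀ x ∈ I, eta h x = 0)
    {x : TV θ} (hx : x ∈ I) : pairOp S i j h a b x ∈ I :=
  hI.wordDeriv_pow_mem i a (hI.wordDeriv_pow_mem j b (hI.act_mem hη hx))

/-- The scalar `pairOp S i j h a b (pairElem q i j a b)`. -/
def pairScalar (q : Fin θ → Fin θ → ℂˣ) (i j : Fin θ) (a b : ℕ) : ℂ :=
  qascFac (q i i) 0 a * defect (q i i) a * (qascFac (q j j) 0 b * defect (q j j) b)

theorem pairScalar_ne_zero (ha : ∀ t < a, (q i i : ℂ) ^ (t + 2) ≠ 1)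
    (hb : ∀ t < b, (q j j : ℂ) ^ (t + 2) ≠ 1) : pairScalar q i j a b ≠ 0 :=
  mul_ne_zero (mul_ne_zero (qascFac_zero_ne_zero ha) (defect_ne_zero ha))
    (mul_ne_zero (qascFac_zero_ne_zero hb) (defect_ne_zero hb))

variable (hij : i ≠ j) (hc : qtil q i j = 1) (hh : h i j - q i j * h j i = 1)

include hij hc hh

theorem act_eta_pairElem_zero (b : ℕ) :
    act S (eta h) (pairElem q i j 0 b) = defect (q j j) b • gen θ j ^ b := by
  refine (eq_defect_smul_pow (f := fun b => act S (eta h) (pairElem q i j 0 b)) (x := gen θ j)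
    (r := q j j) ((act_eta_xw_pair hh).trans (one_smul ℂ _).symm) (fun n => ?_) b).trans
    (by rw [one_mul])
  have hcoef : (q j j : ℂ) ^ (n + 2) = (bichar q (δ θ j) (n • δ θ j + (δ θ i + δ θ j)) *
      bichar q (δ θ i + δ θ j) (δ θ j) : ℂˣ) := by
    simp only [bichar_add_left, bichar_add_right, bichar_nsmul_right, bichar_δ, Units.val_mul,
      Units.val_pow_eq_pow_val]
    rw [qtil] at hc
    linear_combination -(q j j : ℂ) ^ (n + 2) * hc
  rw [hcoef]
  exact act_eta_ad1 (pairElem_mem_pairSubalgebra hij hc 0 n)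
    (adIter_mem_homogD (xw_pair_mem_homogD i j) j n) h j

theorem wordDeriv_pow_act_eta_pairElem (a b : ℕ) :
    (wordDeriv S [j] ^ b) (act S (eta h) (pairElem q i j a b)) =
      (qascFac (q j j) 0 b * defect (q j j) b * defect (q i i) a) • gen θ i ^ a := by
  refine eq_defect_smul_pow
    (f := fun a => (wordDeriv S [j] ^ b) (act S (eta h) (pairElem q i j a b))) ?_ (fun n => ?_) a
  · have hgen := wordDeriv_pow_gen_pow S j 0 b
    rw [zero_add, pow_zero] at hgen
    rw [act_eta_pairElem_zero hij hc hh, map_smul, hgen, smul_smul, mul_comm]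
  · have hcoef : (q i i : ℂ) ^ (n + 2) = (bichar q (δ θ i) (pairDeg i j n b) *
        bichar q (δ θ i + δ θ j) (δ θ i) : ℂˣ) * (q j i : ℂ) ^ b := by
      simp only [pairDeg, bichar_add_left, bichar_add_right, bichar_nsmul_right, bichar_δ,
        Units.val_mul, Units.val_pow_eq_pow_val]
      have hc' : (q i j : ℂ) ^ (b + 1) * q j i ^ (b + 1) = 1 := by
        rw [← mul_pow, ← qtil, hc, one_pow]
      linear_combination -(q i i : ℂ) ^ (n + 2) * hc'
    have had : act S (eta h) (pairElem q i j (n + 1) b) = _ :=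
      act_eta_ad1 (pairElem_mem_pairSubalgebra hij hc n b) (pairElem_mem_homogD i j n b) h i
    rw [had, map_sub, map_smul, wordDeriv_pow_gen_mul S hij.symm, wordDeriv_pow_mul_gen S hij.symm,
      smul_smul, hcoef]

theorem pairOp_pairElem_self (a b : ℕ) :
    pairOp S i j h a b (pairElem q i j a b) = pairScalar q i j a b • 1 := by
  have hgen := wordDeriv_pow_gen_pow S i 0 a
  rw [zero_add, pow_zero] at hgen
  rw [pairOp, Module.End.mul_apply, Module.End.mul_apply,
    wordDeriv_pow_act_eta_pairElem hij hc hh, map_smul, hgen, pairScalar]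
  module

theorem pairOp_pairElem_of_lt (a a' : ℕ) {b b' : ℕ} (hb : b' < b) :
    pairOp S i j h a b (pairElem q i j a' b') = 0 := by
  obtain ⟨t, rfl⟩ := Nat.exists_eq_add_of_lt hb
  rw [pairOp, Module.End.mul_apply, Module.End.mul_apply, show b' + t + 1 = t + 1 + b' by omega,
    pow_add, Module.End.mul_apply, wordDeriv_pow_act_eta_pairElem hij hc hh, pow_succ,
    Module.End.mul_apply, map_smul, wordDeriv_gen_pow_of_ne S hij.symm]
  simp

theorem pairOp_pairElem_zero_of_le (ha : a ≠ 0) {b b' : ℕ} (hb : b' ≤ b) :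
    pairOp S i j h a b' (pairElem q i j 0 b) = 0 := by
  obtain ⟨t, rfl⟩ := Nat.exists_eq_add_of_le' hb
  obtain ⟨s, rfl⟩ := Nat.exists_eq_succ_of_ne_zero ha
  rw [pairOp, Module.End.mul_apply, Module.End.mul_apply, act_eta_pairElem_zero hij hc hh,
    map_smul, wordDeriv_pow_gen_pow, Nat.succ_eq_add_one, pow_succ, Module.End.mul_apply]
  simp [wordDeriv_gen_pow_of_ne S hij]

end PairOperators

section RankTwoSubquotients

variable {θ : ℕ} {q : Fin θ → Fin θ → ℂˣ} {S : BraidedStr θ q} {I : Submodule ℂ (TV θ)}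
  {i j : Fin θ}

theorem δ_ne_zero (k : Fin θ) : δ θ k ≠ 0 := fun h => by simpa [δ] using congrFun h k

theorem finiteRootSystem_gen_pairElem (hAAH : AAH) (hI : IsPreNicholsIdeal S I) (hGK : FinGK I)
    (hij : i ≠ j) (hc : qtil q i j = 1) (hx : xw q [i, j] ∉ I) {k : Fin θ} (hkj : k ≠ j)
    (hk : qtil q i k * qtil q j k ≠ 1) {b : ℕ} (hb : ∀ t < b, (q j j : ℂ) ^ (t + 2) ≠ 1) :
    FiniteRootSystem (restrict q ![δ θ k, pairDeg i j 0 b]) := by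
  obtain ⟨h, hkk, hh, hη⟩ := exists_eta hI hij hc hx hk
  have hY := pairElem_mem_pairSubalgebra (S := S) hij hc 0 b
  refine finiteRootSystem_restrict (Y := ![gen θ k, pairElem q i j 0 b])
    (P := ![wordDeriv S [k], pairOp S i j h 0 b]) (G := pairSubalgebra S i j {k})
    (κ := ![1, pairScalar q i j 0 b]) hAAH hI hGK ?_ ?_ ?_ ?_ ?_ ?_ ?_ <;>
    simp only [Fin.forall_fin_two, Matrix.cons_val_zero, Matrix.cons_val_one]
  · exact ⟨δ_ne_zero k, pairDeg_ne_zero i j 0 b⟩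
  · exact ⟨gen_mem_homogD k, pairElem_mem_homogD i j 0 b⟩
  · exact ⟨gen_mem_pairSubalgebra rfl, pairSubalgebra_empty_le hY⟩
  · exact ⟨isSkewDerivationOn_wordDeriv k, isSkewDerivationOn_pairOp Set.subsingleton_singleton
      (fun m hm => hm ▸ hkk) hkj.symm (Or.inl rfl)⟩
  · exact ⟨fun x hx => hI.wordDeriv_mem k hx, fun x hx => hI.pairOp_mem hη hx⟩
  · exact ⟨one_ne_zero, pairScalar_ne_zero (by simp) hb⟩
  · refine ⟨⟨?_, ?_⟩, ?_, ?_⟩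
    · simp [wordDeriv_singleton_gen]
    · simpa using hY.1 k (Set.notMem_empty k)
    · simp [pairOp, act_eta_gen]
    · simpa using pairOp_pairElem_self hij hc hh 0 b

theorem finiteRootSystem_pairElem_pairElem (hAAH : AAH) (hI : IsPreNicholsIdeal S I)
    (hGK : FinGK I) (hij : i ≠ j) (hc : qtil q i j = 1) (hx : xw q [i, j] ∉ I) {a b b' : ℕ}
    (ha : a ≠ 0) (hbb : b' < b) (hi : ∀ t < a, (q i i : ℂ) ^ (t + 2) ≠ 1)
    (hj : ∀ t < b, (q j j : ℂ) ^ (t + 2) ≠ 1) :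
    FiniteRootSystem (restrict q ![pairDeg i j 0 b, pairDeg i j a b']) := by
  obtain ⟨h, -, hh, hη⟩ := exists_eta hI hij hc hx (k := i) (by
    rw [show qtil q j i = 1 by rw [← hc, qtil, qtil, mul_comm], mul_one, qtil, ← sq]
    exact hi 0 (Nat.pos_of_ne_zero ha))
  have hskew (a b : ℕ) := isSkewDerivationOn_pairOp (S := S) (i := i) (j := j) (X := ∅) (h := h)
    (a := a) (b := b) Set.subsingleton_empty (by simp) (Set.notMem_empty j)
    (Or.inr (Set.notMem_empty i))
  refine finiteRootSystem_restrict (Y := ![pairElem q i j 0 b, pairElem q i j a b'])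
    (P := ![pairOp S i j h 0 b, pairOp S i j h a b']) (G := pairSubalgebra S i j ∅)
    (κ := ![pairScalar q i j 0 b, pairScalar q i j a b']) hAAH hI hGK ?_ ?_ ?_ ?_ ?_ ?_ ?_ <;>
    simp only [Fin.forall_fin_two, Matrix.cons_val_zero, Matrix.cons_val_one]
  · exact ⟨pairDeg_ne_zero i j 0 b, pairDeg_ne_zero i j a b'⟩
  · exact ⟨pairElem_mem_homogD i j 0 b, pairElem_mem_homogD i j a b'⟩
  · exact ⟨pairElem_mem_pairSubalgebra hij hc 0 b, pairElem_mem_pairSubalgebra hij hc a b'⟩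
  · exact ⟨hskew 0 b, hskew a b'⟩
  · exact ⟨fun x hx => hI.pairOp_mem hη hx, fun x hx => hI.pairOp_mem hη hx⟩
  · exact ⟨pairScalar_ne_zero (by simp) hj,
      pairScalar_ne_zero hi fun t ht => hj t (ht.trans hbb)⟩
  · refine ⟨⟨?_, ?_⟩, ?_, ?_⟩
    · simpa using pairOp_pairElem_self hij hc hh 0 b
    · simpa using pairOp_pairElem_of_lt hij hc hh 0 a hbb
    · simpa using pairOp_pairElem_zero_of_le hij hc hh ha hbb.le
    · simpa using pairOp_pairElem_self hij hc hh a b'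

end RankTwoSubquotients

section CartanMatrix

variable {θ : ℕ} {q q' : Fin θ → Fin θ → ℂˣ} {i j : Fin θ}

theorem coe_mul_eq_qtil (i j : Fin θ) : ((q i j * q j i : ℂˣ) : ℂ) = qtil q i j := Units.val_mul _ _

theorem mem_cSet_iff (hi : q i i ≠ 1) {n : ℕ} :
    n ∈ cSet q i j ↔ q i i ^ (n + 1) = 1 ∨ q i i ^ n * (q i j * q j i) = 1 := by
  have hqnum : qnum (q i i) (n + 1) = 0 ↔ (q i i : ℂ) ^ (n + 1) = 1 := by
    refine ⟨pow_eq_one_of_qnum_eq_zero, fun h => ?_⟩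
    refine (mul_eq_zero.1 (?_ : qnum (q i i) (n + 1) * ((q i i : ℂ) - 1) = 0)).resolve_right
      (sub_ne_zero.2 (by simpa using hi))
    rw [qnum, geom_sum_mul, h, sub_self]
  rw [cSet, Set.mem_ofPred_eq, mul_eq_zero, hqnum, sub_eq_zero, eq_comm (a := (1 : ℂ)),
    ← coe_mul_eq_qtil]
  simp only [← Units.val_pow_eq_pow_val, ← Units.val_mul, Units.val_eq_one]

theorem cij_of_ne (hij : i ≠ j) : cij q i j = -(sInf (cSet q i j) : ℕ) := if_neg hij

theorem cij_eq_two_sub_orderOf (hij : i ≠ j) (hi : 3 ≤ orderOf (q i i))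
    (he : q i j * q j i = q i i ^ 2) : cij q i j = 2 - orderOf (q i i) := by
  have h1 : q i i ≠ 1 := fun h => by simp [h] at hi
  have hmin : IsLeast (cSet q i j) (orderOf (q i i) - 2) := by
    refine ⟨(mem_cSet_iff h1).2 (Or.inr ?_), fun n hn => ?_⟩
    · rw [he, ← pow_add, Nat.sub_add_cancel (by omega), pow_orderOf_eq_one]
    · rw [mem_cSet_iff h1, he, ← pow_add] at hn
      rcases hn with hn | hn
      · have := orderOf_le_of_pow_eq_one (by omega) hn
        omega
      · have := orderOf_le_of_pow_eq_one (by omega) hn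
        omega
  rw [cij_of_ne hij, hmin.csInf_eq]
  omega

theorem cij_eq_neg_two (hij : i ≠ j) (hi : q i i ^ 2 ≠ 1) (he : q i i ^ 2 * (q i j * q j i) = 1) :
    cij q i j = -2 := by
  have h1 : q i i ≠ 1 := fun h => hi (by rw [h, one_pow])
  have hmin : IsLeast (cSet q i j) 2 := by
    refine ⟨(mem_cSet_iff h1).2 (Or.inr he), fun n hn => ?_⟩
    by_contra! hlt
    rw [mem_cSet_iff h1] at hn
    interval_cases n
    · simp only [zero_add, pow_one, h1, pow_zero, one_mul, false_or] at hn
      exact hi (by simpa [hn] using he)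
    · simp only [one_add_one_eq_two, hi, pow_one, false_or] at hn
      exact h1 (by simpa [sq, mul_assoc, hn] using he)
  rw [cij_of_ne hij, hmin.csInf_eq]
  rfl

/-- The braiding matrices `q` and `q'` have the same Dynkin diagram. -/
def SameDiagram (q q' : Fin θ → Fin θ → ℂˣ) : Prop :=
  ∀ i j, q' i i = q i i ∧ q' i j * q' j i = q i j * q j i

theorem SameDiagram.cij_eq (h : SameDiagram q q') : cij q' = cij q := by
  funext i j
  simp only [cij, cSet, ← coe_mul_eq_qtil, h i j]

/-- The braiding matrix `q` is of Cartan type: `q̃_{ij} = q_{ii}^{c_{ij}}` for all `i`, `j`. -/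
def IsCartanType (q : Fin θ → Fin θ → ℂˣ) : Prop :=
  ∀ i j, q i j * q j i = q i i ^ cij q i j

theorem IsCartanType.sameDiagram_reflectMat (hq : IsCartanType q) (h : SameDiagram q q')
    (m : Fin θ) : SameDiagram q (reflectMat q' m) := by
  have hq' (j : Fin θ) : q' j m = q' m m ^ cij q' m j * (q' m j)⁻¹ := by
    rw [eq_mul_inv_iff_mul_eq, mul_comm, (h m j).2, hq, (h m j).1, h.cij_eq]
  have hdiag (i : Fin θ) : reflectMat q' m i i = q' i i := by
    rw [reflectMat, hq' i]
    apply Additive.ofMul.injective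
    simp only [ofMul_mul, ofMul_zpow, ofMul_inv]
    module
  have hedge (i j : Fin θ) :
      reflectMat q' m i j * reflectMat q' m j i = q' i j * q' j i := by
    rw [reflectMat, reflectMat, hq' i, hq' j]
    apply Additive.ofMul.injective
    simp only [ofMul_mul, ofMul_zpow, ofMul_inv]
    module
  exact fun i j => ⟨(hdiag i).trans (h i j).1, (hedge i j).trans (h i j).2⟩

theorem FiniteRootSystem.cSet_nonempty (h : FiniteRootSystem q) (hij : i ≠ j) :
    (cSet q i j).Nonempty :=
  h.1 q i ⟨_, ReachRoot.simple i⟩ j hij.symm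

end CartanMatrix

section RankTwoCartan

variable {p : Fin 2 → Fin 2 → ℂˣ}

theorem isCartanType_fin_two (h0 : p 0 1 * p 1 0 = p 0 0 ^ cij p 0 1)
    (h1 : p 0 1 * p 1 0 = p 1 1 ^ cij p 1 0) : IsCartanType p := by
  simp only [IsCartanType, Fin.forall_fin_two]
  exact ⟨⟨by rw [cij, if_pos rfl, zpow_two], h0⟩, by rwa [mul_comm],
    by rw [cij, if_pos rfl, zpow_two]⟩

theorem reflect_reflect_expanding {a b x y : ℤ} (ha : 0 < a) (hb : 0 < b) (hab : 4 ≤ a * b)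
    (hx : 0 ≤ x) (hy : 0 ≤ y) (hxy : 2 * x < a * y) :
    x < a * y - x ∧ 0 ≤ b * (a * y - x) - y ∧ 2 * (a * y - x) < a * (b * (a * y - x) - y) := by
  have hx' : x < a * y - x := by linarith
  have hby : 2 * y < b * (a * y - x) := by
    have hbx : b * (2 * x) < b * (a * y) := mul_lt_mul_of_pos_left hxy hb
    have hab' : 4 * y ≤ a * b * y := mul_le_mul_of_nonneg_right hab hy
    linarith
  have hab' : 4 * (a * y - x) ≤ a * b * (a * y - x) :=
    mul_le_mul_of_nonneg_right hab (hx.trans hx'.le)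
  have haby : a * (2 * y) < a * (b * (a * y - x)) := mul_lt_mul_of_pos_left hby ha
  exact ⟨hx', by linarith, by linarith [haby]⟩

theorem IsCartanType.exists_reachRoot_ge (hp : IsCartanType p)
    (h4 : 4 ≤ cij p 0 1 * cij p 1 0) (n : ℕ) :
    ∃ p' β, ReachRoot p p' β ∧ SameDiagram p p' ∧
      n ≤ β 0 ∧ 0 ≤ β 1 ∧ 2 * β 0 < -cij p 0 1 * β 1 := by
  have h01 : cij p 0 1 < 0 := by
    have : cij p 0 1 ≤ 0 := by simp [cij]
    exact this.lt_of_ne fun h => by simp [h] at h4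
  have h10 : cij p 1 0 < 0 := neg_of_mul_pos_right (by linarith) h01.le
  induction n with
  | zero =>
    exact ⟨p, _, ReachRoot.simple 1, fun _ _ => ⟨rfl, rfl⟩, by simp, by simp, by simpa using h01⟩
  | succ n ih =>
    obtain ⟨p', β, hβ, hp', h0, h1, h2⟩ := ih
    have hp'' := hp.sameDiagram_reflectMat hp' 0
    refine ⟨_, _, (hβ.reflect 0).reflect 1, hp.sameDiagram_reflectMat hp'' 1, ?_⟩
    obtain ⟨e0, e1, e2⟩ := reflect_reflect_expanding (neg_pos.2 h01) (neg_pos.2 h10)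
      (by linarith) ((Int.natCast_nonneg n).trans h0) h1 h2
    have hβ0 : sRefl p' 0 β 0 = -cij p 0 1 * β 1 - β 0 := by
      rw [← hp'.cij_eq]
      simp only [sRefl, Fin.isValue, ↓reduceIte, cij, Int.ofNat_eq_natCast, ite_mul, neg_mul,
        Fin.sum_univ_two, zero_ne_one, neg_neg]
      ring
    have hβ1 : sRefl p' 0 β 1 = β 1 := by simp [sRefl]
    have hγ0 (γ : Fin 2 → ℤ) : sRefl (reflectMat p' 0) 1 γ 0 = γ 0 := by simp [sRefl]
    have hγ1 (γ : Fin 2 → ℤ) :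
        sRefl (reflectMat p' 0) 1 γ 1 = -cij p 1 0 * γ 0 - γ 1 := by
      rw [← hp''.cij_eq]
      simp only [sRefl, Fin.isValue, ↓reduceIte, cij, Int.ofNat_eq_natCast, ite_mul, neg_mul,
        Fin.sum_univ_two, one_ne_zero, neg_neg]
      ring
    rw [hγ0, hγ1, hβ0, hβ1]
    exact ⟨by push_cast; linarith [e0], e1, e2⟩

theorem IsCartanType.not_finiteRootSystem (hp : IsCartanType p)
    (h4 : 4 ≤ cij p 0 1 * cij p 1 0) : ¬FiniteRootSystem p := by
  rintro ⟨-, hfin⟩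
  obtain ⟨B, hB⟩ := (hfin.image fun β => β 0).bddAbove
  obtain ⟨p', β, hβ, -, hn, -⟩ := hp.exists_reachRoot_ge h4 (B.toNat + 1)
  have hβB : β 0 ≤ B := hB ⟨β, ⟨p', hβ⟩, rfl⟩
  omega

end RankTwoCartan

section RankTwoDiagrams

/-- The Dynkin diagram with two vertices `u`, `v` and the edge label `e` is realized by a braiding
matrix with finite root system; the value `e = 1` stands for the absence of the edge. -/
def IsArithmeticDiagram (u e v : ℂˣ) : Prop :=
  ∃ p : Fin 2 → Fin 2 → ℂˣ, p 0 0 = u ∧ p 0 1 * p 1 0 = e ∧ p 1 1 = v ∧ FiniteRootSystem p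

variable {u e v : ℂˣ}

theorem IsArithmeticDiagram.edge_eq_one (h : IsArithmeticDiagram u e 1) : e = 1 := by
  obtain ⟨p, -, rfl, hp, hfin⟩ := h
  obtain ⟨n, hn⟩ := hfin.cSet_nonempty (i := 1) (j := 0) one_ne_zero
  have hn' : (n + 1 : ℂ) = 0 ∨ 1 - qtil p 1 0 = 0 := by simpa [cSet, qnum, hp] using hn
  have hq := hn'.resolve_left (Nat.cast_add_one_ne_zero n)
  rw [sub_eq_zero, ← coe_mul_eq_qtil, eq_comm, Units.val_eq_one] at hq
  rwa [mul_comm]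

theorem IsArithmeticDiagram.isOfFinOrder (h : IsArithmeticDiagram u (u ^ 2) v) :
    IsOfFinOrder u := by
  obtain ⟨p, rfl, he, -, hfin⟩ := h
  by_cases h1 : p 0 0 = 1
  · exact h1 ▸ IsOfFinOrder.one
  obtain ⟨n, hn⟩ := hfin.cSet_nonempty (i := 0) (j := 1) zero_ne_one
  rw [mem_cSet_iff h1, he, ← pow_add] at hn
  exact hn.elim (fun h => isOfFinOrder_iff_pow_eq_one.2 ⟨_, by omega, h⟩)
    fun h => isOfFinOrder_iff_pow_eq_one.2 ⟨_, by omega, h⟩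

theorem not_isArithmeticDiagram_of_sq_mul_eq_one (hu : u ^ 2 ≠ 1) (he : u ^ 2 * e = 1) :
    ¬IsArithmeticDiagram u e u := by
  rintro ⟨p, h0, rfl, h1, hfin⟩
  have h01 : cij p 0 1 = -2 := cij_eq_neg_two zero_ne_one (by rwa [h0]) (by rwa [h0])
  have h10 : cij p 1 0 = -2 :=
    cij_eq_neg_two one_ne_zero (by rwa [h1]) (by rwa [h1, mul_comm (p 1 0)])
  have hpow : p 0 1 * p 1 0 = u ^ (-2 : ℤ) := eq_inv_of_mul_eq_one_right he
  refine (isCartanType_fin_two ?_ ?_).not_finiteRootSystem ?_ hfin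
  · rw [h01, h0, hpow]
  · rw [h10, h1, hpow]
  · rw [h01, h10]; norm_num

theorem three_le_orderOf {G : Type*} [Monoid G] {x : G} (hx : IsOfFinOrder x) (h2 : x ^ 2 ≠ 1) :
    3 ≤ orderOf x := by
  have hpos := hx.orderOf_pos
  by_contra! hlt
  refine h2 (orderOf_dvd_iff_pow_eq_one.1 ?_)
  interval_cases orderOf x <;> decide

theorem orderOf_dvd_two_mul_of_sq_eq_sq {G : Type*} [Monoid G] {x y : G} (hxy : x ^ 2 = y ^ 2) :
    orderOf x ∣ 2 * orderOf y := by
  rw [orderOf_dvd_iff_pow_eq_one, pow_mul, hxy, ← pow_mul, mul_comm, pow_mul, pow_orderOf_eq_one,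
    one_pow]

theorem four_le_sub_two_mul_sub_two {m n : ℤ} (hm : 3 ≤ m) (hn : 3 ≤ n) (hmn : m ∣ 2 * n)
    (hnm : n ∣ 2 * m) (h33 : ¬(m = 3 ∧ n = 3)) : 4 ≤ (m - 2) * (n - 2) := by
  rcases hm.eq_or_lt with rfl | hm'
  · omega
  rcases hn.eq_or_lt with rfl | hn'
  · omega
  nlinarith

theorem not_isArithmeticDiagram_of_sq_eq_sq (hu : u ^ 2 ≠ 1) (huv : u ^ 2 = v ^ 2)
    (h33 : ¬(orderOf u = 3 ∧ orderOf v = 3)) : ¬IsArithmeticDiagram u (u ^ 2) v := by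
  intro h
  have hufin := h.isOfFinOrder
  have hvfin : IsOfFinOrder v := IsOfFinOrder.of_pow (huv ▸ hufin.pow) two_ne_zero
  have hu3 := three_le_orderOf hufin hu
  have hv3 := three_le_orderOf hvfin (huv ▸ hu)
  obtain ⟨p, rfl, he, rfl, hfin⟩ := h
  have h01 := cij_eq_two_sub_orderOf zero_ne_one hu3 he
  have h10 := cij_eq_two_sub_orderOf one_ne_zero hv3 (by rw [mul_comm, he, huv])
  have hpow (x : ℂˣ) : x ^ (2 - orderOf x : ℤ) = x ^ 2 := by
    rw [zpow_sub, zpow_natCast, pow_orderOf_eq_one, inv_one, mul_one]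
    rfl
  refine (isCartanType_fin_two ?_ ?_).not_finiteRootSystem ?_ hfin
  · rw [h01, hpow, he]
  · rw [h10, hpow, he, huv]
  · have := four_le_sub_two_mul_sub_two (m := orderOf (p 0 0)) (n := orderOf (p 1 1))
      (by exact_mod_cast hu3) (by exact_mod_cast hv3)
      (by exact_mod_cast orderOf_dvd_two_mul_of_sq_eq_sq huv)
      (by exact_mod_cast orderOf_dvd_two_mul_of_sq_eq_sq huv.symm) (by exact_mod_cast h33)
    rw [h01, h10]
    linarith

end RankTwoDiagrams

section PairDegrees

variable {θ : ℕ} {q : Fin θ → Fin θ → ℂˣ} {i j : Fin θ}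

theorem mul_eq_one_of_qtil_eq_one (hc : qtil q i j = 1) : q i j * q j i = 1 :=
  Units.ext ((coe_mul_eq_qtil i j).trans hc)

theorem bichar_pairDeg_left (i j : Fin θ) (a b : ℕ) (c : Fin θ → ℕ) :
    bichar q (pairDeg i j a b) c =
      bichar q (δ θ i) c ^ (a + 1) * bichar q (δ θ j) c ^ (b + 1) := by
  simp only [pairDeg, bichar_add_left, bichar_nsmul_left, pow_succ]
  ac_rfl

theorem bichar_pairDeg_right (i j : Fin θ) (a b : ℕ) (c : Fin θ → ℕ) :
    bichar q c (pairDeg i j a b) =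
      bichar q c (δ θ i) ^ (a + 1) * bichar q c (δ θ j) ^ (b + 1) := by
  simp only [pairDeg, bichar_add_right, bichar_nsmul_right, pow_succ]
  ac_rfl

theorem bichar_pairDeg_self (hc : qtil q i j = 1) (a b : ℕ) :
    bichar q (pairDeg i j a b) (pairDeg i j a b) = q i i ^ (a + 1) ^ 2 * q j j ^ (b + 1) ^ 2 := by
  simp only [bichar_pairDeg_left, bichar_pairDeg_right, bichar_δ,
    eq_inv_of_mul_eq_one_right (mul_eq_one_of_qtil_eq_one hc)]
  apply Additive.ofMul.injective
  simp only [ofMul_mul, ofMul_pow, ofMul_inv]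
  module

theorem bichar_pairDeg_mul_bichar_pairDeg (hc : qtil q i j = 1) (a b a' b' : ℕ) :
    bichar q (pairDeg i j a b) (pairDeg i j a' b') *
        bichar q (pairDeg i j a' b') (pairDeg i j a b) =
      q i i ^ (2 * (a + 1) * (a' + 1)) * q j j ^ (2 * (b + 1) * (b' + 1)) := by
  simp only [bichar_pairDeg_left, bichar_pairDeg_right, bichar_δ,
    eq_inv_of_mul_eq_one_right (mul_eq_one_of_qtil_eq_one hc)]
  apply Additive.ofMul.injective
  simp only [ofMul_mul, ofMul_pow, ofMul_inv]
  module

end PairDegrees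

section Orders

variable {G : Type*} {x y : G}

theorem pow_succ_sq_eq_self [Monoid G] {n : ℕ} (hx : x ^ (n + 2) = 1) : x ^ (n + 1) ^ 2 = x := by
  rw [show (n + 1) ^ 2 = (n + 2) * n + 1 by ring, pow_succ, pow_mul, hx, one_pow, one_mul]

theorem pow_four_mul_pow_four_eq_one [CommMonoid G] (h : (x * y) ^ 2 = 1) :
    x ^ 4 * y ^ 4 = 1 := by
  rw [← mul_pow, pow_mul (x * y) 2 2, h, one_pow]

theorem coe_pow_ne_one {x : ℂˣ} {n : ℕ} (h : x ^ n ≠ 1) : (x : ℂ) ^ n ≠ 1 := by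
  rwa [← Units.val_pow_eq_pow_val, Ne, Units.val_eq_one]

end Orders

section NonzeroPairs

variable {θ : ℕ} {q : Fin θ → Fin θ → ℂˣ} {S : BraidedStr θ q} {I : Submodule ℂ (TV θ)}
  {i j : Fin θ}

/-- The situation to be excluded: `x_{ij}` does not vanish in the pre-Nichols algebra `T(V)/I` of
finite Gelfand–Kirillov dimension although `q̃_{ij} = 1`. The conjecture `AAH` is included, so that
all consequences below are stated about one hypothesis. -/
structure NonzeroPair (S : BraidedStr θ q) (I : Submodule ℂ (TV θ)) (i j : Fin θ) : Prop where
  aah : AAH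
  ideal : IsPreNicholsIdeal S I
  finGK : FinGK I
  ne : i ≠ j
  qtil_eq : qtil q i j = 1
  notMem : xw q [i, j] ∉ I

namespace NonzeroPair

theorem symm (h : NonzeroPair S I i j) : NonzeroPair S I j i where
  aah := h.aah
  ideal := h.ideal
  finGK := h.finGK
  ne := h.ne.symm
  qtil_eq := (mul_comm _ _).trans h.qtil_eq
  notMem hx := by
    have hq : (q i j : ℂ) * q j i = 1 := h.qtil_eq
    have hxw : xw q [i, j] = -(q i j : ℂ) • xw q [j, i] := by
      rw [xw_pair, xw_pair, smul_sub, smul_smul, neg_mul, hq]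
      module
    exact h.notMem (hxw ▸ I.smul_mem _ hx)

theorem isArithmeticDiagram_gen (h : NonzeroPair S I i j) {k : Fin θ} (hkj : k ≠ j)
    (hk : qtil q i k * qtil q j k ≠ 1) {b : ℕ} (hb : ∀ t < b, q j j ^ (t + 2) ≠ 1) :
    IsArithmeticDiagram (q k k) (q i k * q k i * (q j k * q k j) ^ (b + 1))
      (q i i * q j j ^ (b + 1) ^ 2) := by
  refine ⟨_, ?_, ?_, ?_, finiteRootSystem_gen_pairElem h.aah h.ideal h.finGK h.ne h.qtil_eq h.notMem
    hkj hk fun t ht => coe_pow_ne_one (hb t ht)⟩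
  · exact bichar_δ q k k
  · simp only [restrict, Matrix.cons_val_zero, Matrix.cons_val_one, Matrix.cons_val_fin_one,
      bichar_pairDeg_right, bichar_δ, zero_add, pow_one, bichar_pairDeg_left, mul_pow]
    ac_rfl
  · simpa [restrict] using bichar_pairDeg_self h.qtil_eq 0 b

theorem isArithmeticDiagram_self (h : NonzeroPair S I i j) (h2 : q i i ^ 2 ≠ 1) {b : ℕ}
    (hb : ∀ t < b, q j j ^ (t + 2) ≠ 1) :
    IsArithmeticDiagram (q i i) (q i i ^ 2) (q i i * q j j ^ (b + 1) ^ 2) := by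
  have hji : q j i * q i j = 1 := mul_eq_one_of_qtil_eq_one h.symm.qtil_eq
  have hk : qtil q i i * qtil q j i ≠ 1 := by
    rw [h.symm.qtil_eq, mul_one, qtil, ← sq]
    exact coe_pow_ne_one h2
  simpa [hji, ← sq] using h.isArithmeticDiagram_gen h.ne hk hb

theorem isArithmeticDiagram_pair (h : NonzeroPair S I i j) {a b b' : ℕ} (ha : a ≠ 0) (hbb : b' < b)
    (hi : ∀ t < a, q i i ^ (t + 2) ≠ 1) (hj : ∀ t < b, q j j ^ (t + 2) ≠ 1) :
    IsArithmeticDiagram (q i i * q j j ^ (b + 1) ^ 2)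
      (q i i ^ (2 * (a + 1)) * q j j ^ (2 * (b + 1) * (b' + 1)))
      (q i i ^ (a + 1) ^ 2 * q j j ^ (b' + 1) ^ 2) := by
  refine ⟨_, ?_, ?_, ?_, finiteRootSystem_pairElem_pairElem h.aah h.ideal h.finGK h.ne h.qtil_eq
    h.notMem ha hbb (fun t ht => coe_pow_ne_one (hi t ht)) fun t ht => coe_pow_ne_one (hj t ht)⟩
  · simpa [restrict] using bichar_pairDeg_self h.qtil_eq 0 b
  · simpa [restrict] using bichar_pairDeg_mul_bichar_pairDeg h.qtil_eq 0 b a b'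
  · exact bichar_pairDeg_self h.qtil_eq a b'

theorem qtil_mul_qtil_eq_one (h : NonzeroPair S I i j) (hs : q i i * q j j = 1) (k : Fin θ) :
    qtil q i k * qtil q j k = 1 := by
  wlog hkj : k ≠ j generalizing i j
  · rw [mul_comm]
    exact this h.symm (by rwa [mul_comm]) (not_not.1 hkj ▸ h.ne.symm)
  by_contra hk
  have hdiagram := h.isArithmeticDiagram_gen hkj hk (b := 0) (by simp)
  simp only [zero_add, one_pow, pow_one, hs] at hdiagram
  exact hk (by simp only [← coe_mul_eq_qtil, ← Units.val_mul, hdiagram.edge_eq_one, Units.val_one])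

theorem isOfFinOrder (h : NonzeroPair S I i j) : IsOfFinOrder (q i i) := by
  by_cases h2 : q i i ^ 2 = 1
  · exact isOfFinOrder_iff_pow_eq_one.2 ⟨2, two_pos, h2⟩
  · exact (h.isArithmeticDiagram_self h2 (b := 0) (by simp)).isOfFinOrder

theorem sq_ne_one (h : NonzeroPair S I i j) (h2 : q i i ^ 2 ≠ 1)
    (h31 : ¬(orderOf (q i i) = 3 ∧ q j j = 1)) : q j j ^ 2 ≠ 1 := by
  intro hj
  refine not_isArithmeticDiagram_of_sq_eq_sq h2 (v := q i i * q j j) ?_ ?_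
    (by simpa using h.isArithmeticDiagram_self h2 (b := 0) (by simp))
  · rw [mul_pow, hj, mul_one]
  · rintro ⟨hi3, hij3⟩
    have hi : q i i ^ 3 = 1 := hi3 ▸ pow_orderOf_eq_one _
    have hij : (q i i * q j j) ^ 3 = 1 := hij3 ▸ pow_orderOf_eq_one _
    rw [mul_pow, hi, one_mul, pow_succ, hj, one_mul] at hij
    exact h31 ⟨hi3, hij⟩

theorem mul_sq_eq_one (h : NonzeroPair S I i j) (hi : q i i ^ 2 ≠ 1) (hj : q j j ^ 2 ≠ 1) :
    (q i i * q j j) ^ 2 = 1 := by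
  by_contra hs
  obtain ⟨a, ha⟩ := Nat.exists_eq_add_of_le' (three_le_orderOf h.isOfFinOrder hi)
  obtain ⟨b, hb⟩ := Nat.exists_eq_add_of_le' (three_le_orderOf h.symm.isOfFinOrder hj)
  have hia : q i i ^ (a + 1 + 2) = 1 := by rw [add_assoc, ← ha, pow_orderOf_eq_one]
  have hjb : q j j ^ (b + 1 + 2) = 1 := by rw [add_assoc, ← hb, pow_orderOf_eq_one]
  have hdiagram := h.isArithmeticDiagram_pair (a := a + 1) (b := b + 1) (b' := 0) (by omega)
    (by omega) (fun t ht => pow_ne_one_of_lt_orderOf (by omega) (by omega))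
    fun t ht => pow_ne_one_of_lt_orderOf (by omega) (by omega)
  rw [pow_succ_sq_eq_self hia, pow_succ_sq_eq_self hjb, zero_add, one_pow, pow_one, mul_one]
    at hdiagram
  refine not_isArithmeticDiagram_of_sq_mul_eq_one hs ?_ hdiagram
  calc (q i i * q j j) ^ 2 * (q i i ^ (2 * (a + 1 + 1)) * q j j ^ (2 * (b + 1 + 1)))
      = (q i i ^ (a + 1 + 2)) ^ 2 * (q j j ^ (b + 1 + 2)) ^ 2 :=
        Units.ext (by push_cast; ring)
    _ = 1 := by rw [hia, hjb, one_pow, one_mul]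

theorem cube_ne_one (h : NonzeroPair S I i j) (hi : q i i ^ 2 ≠ 1) (hj : q j j ^ 2 ≠ 1)
    (hs : (q i i * q j j) ^ 2 = 1) : q i i ^ 3 ≠ 1 := by
  intro h3
  have hdiagram := h.isArithmeticDiagram_self hi (b := 1) (by simpa using hj)
  have hlabel : q i i * q j j ^ (1 + 1) ^ 2 = 1 :=
    calc q i i * q j j ^ (1 + 1) ^ 2 = q i i ^ 3 * (q i i * q j j ^ 4) := by rw [h3, one_mul]; rfl
      _ = q i i ^ 4 * q j j ^ 4 := Units.ext (by push_cast; ring)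
      _ = 1 := pow_four_mul_pow_four_eq_one hs
  rw [hlabel] at hdiagram
  exact hi hdiagram.edge_eq_one

theorem pow_four_ne_one (h : NonzeroPair S I i j) (hi : q i i ^ 2 ≠ 1) (hj : q j j ^ 2 ≠ 1)
    (hs : (q i i * q j j) ^ 2 = 1) : q i i ^ 4 ≠ 1 := by
  intro h4
  have hj4 : q j j ^ (1 + 1) ^ 2 = 1 := by
    simpa [h4] using pow_four_mul_pow_four_eq_one hs
  have hdiagram := h.isArithmeticDiagram_self hi (b := 1) (by simpa using hj)
  rw [hj4, mul_one] at hdiagram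
  refine not_isArithmeticDiagram_of_sq_eq_sq hi rfl (fun ⟨h3, _⟩ => ?_) hdiagram
  have := orderOf_dvd_of_pow_eq_one h4
  rw [h3] at this
  omega

theorem mul_sq_ne_one (h : NonzeroPair S I i j) (hi : q i i ^ 2 ≠ 1) (hj : q j j ^ 2 ≠ 1) :
    (q i i * q j j) ^ 2 ≠ 1 := by
  intro hs
  have hs' : (q j j * q i i) ^ 2 = 1 := by rwa [mul_comm]
  have hj3 : q j j ^ 3 ≠ 1 := h.symm.cube_ne_one hj hi hs'
  have hj4 : q j j ^ 4 ≠ 1 := h.symm.pow_four_ne_one hj hi hs'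
  have hs4 : q i i ^ 4 * q j j ^ 4 = 1 := pow_four_mul_pow_four_eq_one hs
  have hpow (b : ℕ) (hb : 1 < b) (hb4 : b < 4) : q j j ^ (4 * b) = 1 := by
    have hdiagram := h.isArithmeticDiagram_pair one_ne_zero hb
      (by simpa using hi) fun t ht => by
        have : t < 3 := by omega
        interval_cases t
        exacts [hj, hj3, hj4]
    have hv : q i i ^ (1 + 1) ^ 2 * q j j ^ (1 + 1) ^ 2 = 1 := hs4
    rw [hv] at hdiagram
    calc q j j ^ (4 * b) = q i i ^ 4 * q j j ^ 4 * q j j ^ (4 * b) := by rw [hs4, one_mul]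
      _ = q i i ^ (2 * (1 + 1)) * q j j ^ (2 * (b + 1) * (1 + 1)) :=
        Units.ext (by push_cast; ring)
      _ = 1 := hdiagram.edge_eq_one
  refine hj4 ?_
  calc q j j ^ 4 = q j j ^ (4 * 2) * q j j ^ 4 := by rw [hpow 2 (by simp) (by simp), one_mul]
    _ = q j j ^ (4 * 3) := (pow_add _ _ _).symm
    _ = 1 := hpow 3 (by simp) (by simp)

theorem orderOf_eq_three_and_eq_one (h : NonzeroPair S I i j) (hi : q i i ^ 2 ≠ 1) :
    orderOf (q i i) = 3 ∧ q j j = 1 := by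
  by_contra h31
  have hj := h.sq_ne_one hi h31
  exact h.mul_sq_ne_one hi hj (h.mul_sq_eq_one hi hj)

theorem orderOf_add_orderOf_le_four (h : NonzeroPair S I i j) :
    orderOf (q i i) + orderOf (q j j) ≤ 4 := by
  by_cases hi : q i i ^ 2 = 1
  · by_cases hj : q j j ^ 2 = 1
    · exact Nat.add_le_add (orderOf_le_of_pow_eq_one two_pos hi)
        (orderOf_le_of_pow_eq_one two_pos hj)
    · obtain ⟨hj3, hi1⟩ := h.symm.orderOf_eq_three_and_eq_one hj
      rw [hj3, hi1, orderOf_one]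
  · obtain ⟨hi3, hj1⟩ := h.orderOf_eq_three_and_eq_one hi
    rw [hi3, hj1, orderOf_one]

end NonzeroPair

theorem statement_2_general (S : BraidedStr θ q) (hAAH : AAH) (I : Submodule ℂ (TV θ))
    (hI : IsPreNicholsIdeal S I) (hGK : FinGK I) (i j : Fin θ) (hij : i ≠ j)
    (hc : qtil q i j = 1)
    (hyp : ¬IsOfFinOrder (q i i) ∨ ¬IsOfFinOrder (q j j) ∨
      4 < orderOf (q i i) + orderOf (q j j) ∨
      (q i i : ℂ) * (q j j : ℂ) = 1 ∧ ∃ k, qtil q i k * qtil q j k ≠ 1) :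
    xw q [i, j] ∈ I := by
  by_contra hx
  have h : NonzeroPair S I i j := ⟨hAAH, hI, hGK, hij, hc, hx⟩
  rcases hyp with hi | hj | h4 | ⟨hs, k, hk⟩
  · exact hi h.isOfFinOrder
  · exact hj h.symm.isOfFinOrder
  · exact h4.not_ge h.orderOf_add_orderOf_le_four
  · exact hk (h.qtil_mul_qtil_eq_one (Units.ext hs) k)

end NonzeroPairs

/-- Lemma 3.1(a): if `c_{ij} = 0` (equivalently `q̃_{ij} = 1`) and either
`ord q_{ii} + ord q_{jj} > 4`, or `q_{ii}q_{jj} = 1` and there is `k ∉ {i,j}` with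
`q̃_{ik}q̃_{jk} ≠ 1`, then `x_{ij} = 0` in every finite-GKdim pre-Nichols algebra of `q`. -/
theorem statement_2 (θ : ℕ) (q : Fin θ → Fin θ → ℂˣ) (S : BraidedStr θ q)
    (hconn : (dynkin q).Connected)
    (hfd : FiniteDimensional ℂ (TV θ ⧸ Jq S))
    (hAAH : AAH)
    (I : Submodule ℂ (TV θ)) (hI : IsPreNicholsIdeal S I) (hGK : FinGK I)
    (i j : Fin θ) (hij : i ≠ j)
    (hc : qtil q i j = 1)
    (hyp : 4 < orderOf (q i i) + orderOf (q j j) ∨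
      ((q i i : ℂ) * (q j j : ℂ) = 1 ∧
        ∃ k : Fin θ, k ≠ i ∧ k ≠ j ∧ qtil q i k * qtil q j k ≠ 1)) :
    xw q [i, j] ∈ I :=
  statement_2_general S hAAH I hI hGK i j hij hc <| Or.inr <| Or.inr <|
    hyp.imp_right fun ⟨hs, k, _, _, hk⟩ => ⟨hs, k, hk⟩

end PreNicholsPaper
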